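/- arXiv:2202.06759 — 5 statements merged into one kernel-verified Lean document; each statement's English description precedes it below -/
import Mathlib

section
/- Let ε > 0 be fixed, let p > 2 be a fixed prime, and let α₁, α₂, α₃ be fixed integers coprime to p. Then there exist a constant C > 0 (depending only on p, α₁, α₂, α₃, ε) and n₀ ∈ ℕ such that for all n ≥ n₀, writing q := pⁿ: if there exists (x₁,x₂,x₃) ∈ ℤ³ with p ∤ x₁x₂x₃ and q | α₁x₁²+α₂x₂²+α₃x₃², then there exists such a triple with max(|x₁|,|x₂|,|x₃|) ≤ C · q^{1/2+ε}. -/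
/-!
Let `B` be the bilinear form with diagonal `α`. If `B v v = 0` for an integer vector `v` whose
coordinates are prime to `p`, then `v` is a solution for every `n`. Otherwise, a unit solution `x`
modulo `p` forces `B` to be anisotropic over `ℤ`: a primitive isotropic vector is either
nonorthogonal to `x` modulo `p`, and then its reflection in `x` has coordinates prime to `p`, or
orthogonal to `x` modulo `p`, and then it is proportional to `x` modulo `p`, because totally
isotropic subspaces of a nondegenerate ternary space are at most one-dimensional.

For anisotropic `B`, a unit solution `x` modulo `pⁿ` gives a lattice of index about `p ^ (3 n / 2)`
on which `pⁿ ∣ B t t`, namely the vectors proportional to `x` modulo `p ^ ⌈n / 2⌉` and orthogonal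
to `x` modulo `pⁿ`. By anisotropy its nonzero vectors have size at least a constant times
`p ^ (n / 2)`, so boxes of some side `r` of that order embed into the quotient, whose order is at
most a constant times `r ^ 3`. Let `y` be a shortest vector congruent to `x` modulo the lattice. If
`y` were much longer than `r`, the boxes of side `r` based at points on the way from `0` to `y`, at
distances `0, r, 2 r, …`, would embed disjointly, and there would be too many of them. Vectors
congruent to `x` are again unit solutions once the residue modulo `p` is recorded too.
-/

section Packing

lemma exists_abs_le_and_abs_sub_le {y M s : ℤ} (hy : |y| ≤ M) (hs : 0 ≤ s) (hsM : s ≤ M) :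
    ∃ z : ℤ, |z| ≤ s ∧ |y - z| ≤ M - s :=
  ⟨max (-s) (min s y), by grind, by grind⟩

lemma abs_sub_add_lt_of_shells {y u v a b M r k l : ℤ} (hu : |u| ≤ k * (r + 1))
    (hv : |y - v| ≤ M - l * (r + 1)) (hkl : k < l) (hab : |a - b| ≤ r) :
    |y - (v + b) + (u + a)| < M := by
  have hr : 0 ≤ r := (abs_nonneg _).trans hab
  have hstep : (k + 1) * (r + 1) ≤ l * (r + 1) := by gcongr; lia
  calc |y - (v + b) + (u + a)| = |(y - v) + u + (a - b)| := by congr 1; ring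
    _ ≤ |y - v| + |u| + |a - b| := abs_add_three _ _ _
    _ < M := by linarith

lemma abs_le_sum_natAbs {ι : Type*} [Fintype ι] (x : ι → ℤ) (i : ι) :
    |x i| ≤ (∑ j, (x j).natAbs : ℕ) := by
  rw [Int.abs_eq_natAbs]
  exact_mod_cast Finset.single_le_sum (f := fun j => (x j).natAbs)
    (fun _ _ => Nat.zero_le _) (Finset.mem_univ i)

lemma exists_minimal_preimage {ι β : Type*} [Finite ι] (f : (ι → ℤ) → β) (x : ι → ℤ) :
    ∃ (M : ℕ) (y : ι → ℤ), f y = f x ∧ (∀ i, |y i| ≤ M) ∧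
      ∀ (m : ℕ) (z : ι → ℤ), f z = f x → (∀ i, |z i| ≤ m) → M ≤ m := by
  classical
  have := Fintype.ofFinite ι
  have hex : ∃ M : ℕ, ∃ y, f y = f x ∧ ∀ i, |y i| ≤ M :=
    ⟨∑ i, (x i).natAbs, x, rfl, abs_le_sum_natAbs x⟩
  obtain ⟨y, hyx, hyM⟩ := Nat.find_spec hex
  exact ⟨Nat.find hex, y, hyx, hyM, fun m z hzx hz => Nat.find_min' hex ⟨z, hzx, hz⟩⟩

variable {ι G : Type*} [AddCommGroup G]

lemma injective_apply_add_of_injective_on_box (f : (ι → ℤ) →+ G) {r : ℕ}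
    (hinj : ∀ d : ι → ℤ, f d = 0 → (∀ i, |d i| ≤ r) → d = 0) (z : ι → ℤ) :
    Function.Injective fun a : ι → Fin (r + 1) => f (z + fun i => (a i : ℤ)) := by
  intro a b h
  have hab := hinj ((fun i => (a i : ℤ)) - fun i => (b i : ℤ))
    (by simpa only [map_add, add_right_inj, map_sub, sub_eq_zero] using h)
    (fun i => by simp only [Pi.sub_apply]; grind)
  exact funext fun i => Fin.ext (by simpa [sub_eq_zero] using congrFun hab i)

theorem exists_abs_le_of_injective_on_box [Finite ι] [Finite G] (f : (ι → ℤ) →+ G) {r N : ℕ}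
    (hinj : ∀ d : ι → ℤ, f d = 0 → (∀ i, |d i| ≤ r) → d = 0)
    (hcard : Nat.card G ≤ N * (r + 1) ^ Nat.card ι) (x : ι → ℤ) :
    ∃ y : ι → ℤ, f y = f x ∧ ∀ i, |y i| ≤ N * (r + 1) := by
  obtain ⟨M, y, hyx, hyM, hmin⟩ := exists_minimal_preimage f x
  by_contra! hlarge
  obtain ⟨i₀, hi₀⟩ := hlarge y hyx
  have hlong : (N : ℤ) * (r + 1) < M := hi₀.trans_le (hyM i₀)
  have hMpos : (0 : ℤ) < M := lt_of_le_of_lt (by positivity) hlong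
  have hscale (k : Fin (N + 1)) : (k : ℤ) * (r + 1) ≤ M :=
    calc (k : ℤ) * (r + 1) ≤ N * (r + 1) := by gcongr; lia
      _ ≤ M := hlong.le
  choose z hz hyz using fun (k : Fin (N + 1)) (i : ι) =>
    exists_abs_le_and_abs_sub_le (hyM i) (by positivity : (0 : ℤ) ≤ k * (r + 1)) (hscale k)
  let g (b : Fin (N + 1) × (ι → Fin (r + 1))) : G := f (z b.1 + fun i => (b.2 i : ℤ))
  -- Otherwise exchanging one point for the other in `y` would give a shorter vector.
  have hne {k l : Fin (N + 1)} (hkl : k < l) (a b : ι → Fin (r + 1)) : g (k, a) ≠ g (l, b) := by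
    intro h
    have hshort (i : ι) :
        |(y - (z l + fun i => (b i : ℤ)) + (z k + fun i => (a i : ℤ))) i| ≤ (M - 1 : ℕ) := by
      have hlt := abs_sub_add_lt_of_shells (hz k i) (hyz l i) (by exact_mod_cast hkl)
        (by grind : |(a i : ℤ) - b i| ≤ r)
      simp only [Pi.add_apply, Pi.sub_apply]
      lia
    have hsame : f (y - (z l + fun i => (b i : ℤ)) + (z k + fun i => (a i : ℤ))) = f x := by
      rw [map_add, map_sub, ← hyx, sub_add_eq_add_sub, sub_eq_iff_eq_add]
      exact congrArg _ h
    have := hmin _ _ hsame hshort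
    lia
  have hg : Function.Injective g := by
    rintro ⟨k, a⟩ ⟨l, b⟩ h
    obtain hkl | rfl | hlk := lt_trichotomy k l
    · exact (hne hkl a b h).elim
    · have hab : a = b := injective_apply_add_of_injective_on_box f hinj (z k) h
      rw [hab]
    · exact (hne hlk b a h.symm).elim
  have hbox := Nat.card_le_card_of_injective g hg
  simp only [Nat.card_prod, Nat.card_fun, Nat.card_fin] at hbox
  have hpos : 0 < (r + 1) ^ Nat.card ι := by positivity
  linarith

end Packing

section BilinForm

open LinearMap (BilinForm)

variable {R M : Type*} [CommRing R] [AddCommGroup M] [Module R M] {B : BilinForm R M}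

lemma apply_reflection_self_eq_zero (hB : B.IsSymm) (x : M) {u : M} (hu : B u u = 0) :
    B (B x x • u - (2 * B x u) • x) (B x x • u - (2 * B x u) • x) = 0 := by
  simp only [map_sub, map_smul, LinearMap.sub_apply, LinearMap.smul_apply, smul_eq_mul, hu,
    hB.eq u x]
  ring

lemma dvd_apply_self_of_dvd_apply (hB : B.IsSymm) {d q l : R} {x s : M} (hq : q ∣ d ^ 2)
    (hx : q ∣ B x x) (hxt : q ∣ B x (l • x + d • s)) :
    q ∣ B (l • x + d • s) (l • x + d • s) := by
  have expand : B (l • x + d • s) (l • x + d • s) =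
      2 * l * B x (l • x + d • s) - l ^ 2 * B x x + d ^ 2 * B s s := by
    simp only [map_add, map_smul, LinearMap.add_apply, LinearMap.smul_apply, smul_eq_mul,
      hB.eq s x]
    ring
  rw [expand]
  exact ((hxt.mul_left _).sub (hx.mul_left _)).add (hq.mul_right _)

variable {K V : Type*} [Field K] [AddCommGroup V] [Module K V] [FiniteDimensional K V]
  {B : BilinForm K V}

lemma two_mul_finrank_le_of_le_orthogonal (hB : B.Nondegenerate) {W : Submodule K V}
    (hW : W ≤ B.orthogonal W) : 2 * Module.finrank K W ≤ Module.finrank K V := by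
  have hle := Submodule.finrank_mono hW
  rw [LinearMap.BilinForm.finrank_orthogonal hB] at hle
  have := W.finrank_le
  lia

lemma exists_smul_eq_of_isotropic_of_orthogonal (hB : B.Nondegenerate) (hsymm : B.IsSymm)
    (hV : Module.finrank K V ≤ 3) {x u : V} (hx0 : x ≠ 0) (hx : B x x = 0) (hu : B u u = 0)
    (hxu : B x u = 0) : ∃ c : K, c • x = u := by
  by_contra! hne
  have hli : LinearIndependent K ![x, u] := (LinearIndependent.pair_iff' hx0).mpr hne
  have hspan : Set.range ![x, u] = {x, u} := by simp [Set.pair_comm]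
  have hW : Submodule.span K {x, u} ≤ B.orthogonal (Submodule.span K {x, u}) := by
    intro v hv w hw
    obtain ⟨a, b, rfl⟩ := Submodule.mem_span_pair.mp hv
    obtain ⟨c, d, rfl⟩ := Submodule.mem_span_pair.mp hw
    simp [hx, hu, hxu, hsymm.eq u x]
  have hdim := two_mul_finrank_le_of_le_orthogonal hB hW
  rw [← hspan, finrank_span_eq_card hli, Fintype.card_fin] at hdim
  lia

end BilinForm

section DiagBilin

variable {ι R : Type*} [Fintype ι] [DecidableEq ι] [CommRing R]

/-- The bilinear form `∑ i, α i * x i * y i`, whose associated quadratic form is the diagonal form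
with coefficients `α`. -/
def diagBilin (α : ι → R) : LinearMap.BilinForm R (ι → R) :=
  Matrix.toBilin' (Matrix.diagonal α)

lemma diagBilin_apply (α x y : ι → R) : diagBilin α x y = ∑ i, α i * x i * y i := by
  simp [diagBilin, Matrix.toBilin'_apply', dotProduct, Matrix.mulVec_diagonal, mul_left_comm,
    mul_assoc]

lemma isSymm_diagBilin (α : ι → R) : (diagBilin α).IsSymm :=
  Matrix.isSymm_toBilin'_iff_isSymm.mpr (Matrix.isSymm_diagonal α)

lemma nondegenerate_diagBilin {K : Type*} [Field K] {α : ι → K} (hα : ∀ i, α i ≠ 0) :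
    (diagBilin α).Nondegenerate :=
  LinearMap.BilinForm.nondegenerate_toBilin'_of_det_ne_zero' _ <| by
    simpa only [Matrix.det_diagonal] using Finset.prod_ne_zero_iff.mpr fun i _ => hα i

lemma map_diagBilin {S : Type*} [CommRing S] (φ : R →+* S) (α x y : ι → R) :
    φ (diagBilin α x y) = diagBilin (φ ∘ α) (φ ∘ x) (φ ∘ y) := by
  simp only [diagBilin_apply, map_sum, map_mul, Function.comp_apply]

lemma abs_diagBilin_self_le (α : ι → ℤ) {t : ι → ℤ} {r : ℕ} (ht : ∀ i, |t i| ≤ r) :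
    |diagBilin α t t| ≤ ((∑ i, (α i).natAbs) * r ^ 2 : ℕ) := by
  rw [diagBilin_apply]
  push_cast
  rw [Finset.sum_mul]
  refine (Finset.abs_sum_le_sum_abs _ _).trans (Finset.sum_le_sum fun i _ => ?_)
  rw [mul_assoc, ← sq, abs_mul, abs_pow]
  gcongr
  exact ht i

lemma dvd_diagBilin_self_of_dvd_mul_sub_mul {α x t : ι → R} {d q : R} {j : ι}
    (hq : q ∣ d ^ 2) (hcop : IsCoprime q (x j)) (hx : q ∣ diagBilin α x x)
    (hprop : ∀ i, d ∣ x j * t i - t j * x i) (hxt : q ∣ diagBilin α x t) : q ∣ diagBilin α t t := by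
  choose s hs using hprop
  have hdecomp : x j • t = t j • x + d • s := by
    ext i
    simp only [Pi.smul_apply, Pi.add_apply, smul_eq_mul, ← hs]
    ring
  have hdvd : q ∣ diagBilin α (x j • t) (x j • t) := by
    rw [hdecomp]
    apply dvd_apply_self_of_dvd_apply (isSymm_diagBilin α) hq hx
    rw [← hdecomp, map_smul]
    exact hxt.mul_left _
  rw [map_smul, map_smul, LinearMap.smul_apply] at hdvd
  exact hcop.dvd_of_dvd_mul_left (hcop.dvd_of_dvd_mul_left hdvd)

lemma dvd_mul_sub_mul_of_dvd_diagBilin {α x t : Fin 3 → R} {d : R}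
    (hcop : IsCoprime d (α 2 * x 2)) (hx : d ∣ diagBilin α x x)
    (hprop : d ∣ x 0 * t 1 - x 1 * t 0) (hxt : d ∣ diagBilin α x t) (i : Fin 3) :
    d ∣ x 0 * t i - t 0 * x i := by
  have identity : α 2 * x 2 * (x 0 * t 2 - t 0 * x 2) = x 0 * diagBilin α x t -
      t 0 * diagBilin α x x - α 1 * x 1 * (x 0 * t 1 - x 1 * t 0) := by
    simp only [diagBilin_apply, Fin.sum_univ_three]
    ring
  match i with
  | 0 => simp only [mul_comm, sub_self, dvd_zero]
  | 1 => simpa only [mul_comm (t 0)] using hprop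
  | 2 =>
    refine hcop.dvd_of_dvd_mul_left ?_
    rw [identity]
    exact ((hxt.mul_left _).sub (hx.mul_left _)).sub (hprop.mul_left _)

end DiagBilin

section CongruenceHom

/-- The homomorphism `t ↦ (x 0 * t 1 - x 1 * t 0, B x t, t 0)` modulo `a`, `b` and `c`, for `B` the
bilinear form with diagonal `α`. The first two components cut out the vectors proportional to `x`
modulo `a` and orthogonal to `x` modulo `b` (proportionality in the last coordinate being a
consequence), the third one keeps track of the residue of the factor. -/
def congruenceHom (α x : Fin 3 → ℤ) (a b c : ℕ) : (Fin 3 → ℤ) →+ ZMod a × ZMod b × ZMod c :=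
  ((Int.castAddHom (ZMod a)).comp
      ((x 0 • LinearMap.proj 1 - x 1 • LinearMap.proj 0 : (Fin 3 → ℤ) →ₗ[ℤ] ℤ) : _ →+ ℤ)).prod
    (((Int.castAddHom (ZMod b)).comp (diagBilin α x : _ →+ ℤ)).prod
      ((Int.castAddHom (ZMod c)).comp (Pi.evalAddMonoidHom _ 0)))

lemma congruenceHom_eq_zero_iff {α x : Fin 3 → ℤ} {a b c : ℕ} {t : Fin 3 → ℤ} :
    congruenceHom α x a b c t = 0 ↔
      (a : ℤ) ∣ x 0 * t 1 - x 1 * t 0 ∧ (b : ℤ) ∣ diagBilin α x t ∧ (c : ℤ) ∣ t 0 := by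
  simp only [congruenceHom, ← ZMod.intCast_zmod_eq_zero_iff_dvd, Prod.ext_iff]
  rfl

end CongruenceHom

/-- Solutions modulo `p ^ n`, with coordinates prime to `p`, of the homogeneous congruence given by
the diagonal quadratic form with coefficients `α`. -/
def IsUnitSolution {ι : Type*} [Fintype ι] [DecidableEq ι] (α : ι → ℤ) (p n : ℕ) (x : ι → ℤ) :
    Prop :=
  (∀ i, ¬ (p : ℤ) ∣ x i) ∧ (p : ℤ) ^ n ∣ diagBilin α x x

section UnitSolution

variable {p : ℕ} {α x : Fin 3 → ℤ}

lemma IsUnitSolution.not_dvd_two (hp : p.Prime) (hα : ∀ i, ¬ (p : ℤ) ∣ α i)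
    (hx : IsUnitSolution α p 1 x) : ¬ (p : ℤ) ∣ 2 := by
  intro h
  obtain rfl : p = 2 := (Nat.prime_dvd_prime_iff_eq hp Nat.prime_two).mp (by exact_mod_cast h)
  obtain ⟨hx, hBx⟩ := hx
  simp only [Nat.cast_ofNat, Int.two_dvd_ne_zero, ← Int.odd_iff] at hα hx
  rw [pow_one, Nat.cast_ofNat, ← even_iff_two_dvd, ← Int.not_odd_iff_even, diagBilin_apply,
    Fin.sum_univ_three] at hBx
  have hodd (i : Fin 3) : Odd (α i * x i * x i) := ((hα i).mul (hx i)).mul (hx i)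
  exact hBx (((hodd 0).add_odd (hodd 1)).add_odd (hodd 2))

lemma exists_primitive_isotropic {ι : Type*} [Fintype ι] [DecidableEq ι] {α u : ι → ℤ}
    (hp : p.Prime) (hu : u ≠ 0) (hBu : diagBilin α u u = 0) :
    ∃ v : ι → ℤ, (∃ i, ¬ (p : ℤ) ∣ v i) ∧ diagBilin α v v = 0 := by
  obtain ⟨i, hi⟩ := Function.ne_iff.mp hu
  obtain ⟨v, hv, hgcd⟩ := Finset.extract_gcd u ⟨i, Finset.mem_univ i⟩
  have huv : u = Finset.univ.gcd u • v := funext fun j => hv j (Finset.mem_univ j)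
  have hgcd0 : Finset.univ.gcd u ≠ 0 := fun h =>
    hi (Finset.gcd_eq_zero_iff.mp h i (Finset.mem_univ i))
  refine ⟨v, ?_, ?_⟩
  · by_contra! hdvd
    have h1 : (p : ℤ) ∣ 1 := hgcd ▸ Finset.dvd_gcd fun j _ => hdvd j
    exact hp.not_dvd_one (by exact_mod_cast h1)
  · rw [huv, map_smul, map_smul, LinearMap.smul_apply, smul_eq_mul, smul_eq_mul] at hBu
    simpa [hgcd0] using hBu

lemma forall_not_dvd_reflection {ι : Type*} [Fintype ι] [DecidableEq ι] {α x : ι → ℤ}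
    (hp : p.Prime) (hp2 : ¬ (p : ℤ) ∣ 2) (hx : IsUnitSolution α p 1 x) {u : ι → ℤ}
    (hxu : ¬ (p : ℤ) ∣ diagBilin α x u) (i : ι) :
    ¬ (p : ℤ) ∣ (diagBilin α x x • u - (2 * diagBilin α x u) • x) i := by
  have hp' := Nat.prime_iff_prime_int.mp hp
  have hBx : (p : ℤ) ∣ diagBilin α x x := by simpa only [pow_one] using hx.2
  rw [Pi.sub_apply, Pi.smul_apply, Pi.smul_apply, smul_eq_mul, smul_eq_mul,
    dvd_sub_right (hBx.mul_right _)]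
  exact hp'.not_dvd_mul (hp'.not_dvd_mul hp2 hxu) (hx.1 i)

lemma forall_not_dvd_of_dvd_diagBilin (hp : p.Prime) (hα : ∀ i, ¬ (p : ℤ) ∣ α i)
    (hx : IsUnitSolution α p 1 x) {u : Fin 3 → ℤ} (hu : ∃ i, ¬ (p : ℤ) ∣ u i)
    (hBu : (p : ℤ) ∣ diagBilin α u u) (hxu : (p : ℤ) ∣ diagBilin α x u) (i : Fin 3) :
    ¬ (p : ℤ) ∣ u i := by
  have := Fact.mk hp
  obtain ⟨hx, hBx⟩ := hx
  rw [pow_one] at hBx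
  let φ := Int.castRingHom (ZMod p)
  have hφ (a : ℤ) : φ a = 0 ↔ (p : ℤ) ∣ a := ZMod.intCast_zmod_eq_zero_iff_dvd a p
  have hx0 : φ ∘ x ≠ 0 := Function.ne_iff.mpr ⟨0, (hφ _).not.mpr (hx 0)⟩
  obtain ⟨c, hc⟩ := exists_smul_eq_of_isotropic_of_orthogonal (B := diagBilin (φ ∘ α))
    (nondegenerate_diagBilin fun i => (hφ _).not.mpr (hα i)) (isSymm_diagBilin _)
    (Module.finrank_fin_fun _).le hx0 (u := φ ∘ u)
    (by rwa [← map_diagBilin, hφ]) (by rwa [← map_diagBilin, hφ]) (by rwa [← map_diagBilin, hφ])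
  have hcoord (j : Fin 3) : c * φ (x j) = φ (u j) := congrFun hc j
  obtain ⟨j, hj⟩ := hu
  rw [← hφ, ← hcoord] at hj ⊢
  exact mul_ne_zero (left_ne_zero_of_mul hj) ((hφ _).not.mpr (hx i))

theorem exists_isotropic_forall_not_dvd (hp : p.Prime) (hα : ∀ i, ¬ (p : ℤ) ∣ α i)
    (hx : IsUnitSolution α p 1 x) {u : Fin 3 → ℤ} (hu : u ≠ 0) (hBu : diagBilin α u u = 0) :
    ∃ v : Fin 3 → ℤ, (∀ i, ¬ (p : ℤ) ∣ v i) ∧ diagBilin α v v = 0 := by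
  obtain ⟨w, hw, hBw⟩ := exists_primitive_isotropic hp hu hBu
  by_cases hxw : (p : ℤ) ∣ diagBilin α x w
  · exact ⟨w, forall_not_dvd_of_dvd_diagBilin hp hα hx hw (hBw ▸ dvd_zero _) hxw, hBw⟩
  · exact ⟨_, forall_not_dvd_reflection hp (hx.not_dvd_two hp hα) hx hxw,
      apply_reflection_self_eq_zero (isSymm_diagBilin α) x hBw⟩

section Lattice

variable {m n : ℕ} {t : Fin 3 → ℤ}

lemma isCoprime_pow_of_not_dvd (hp : p.Prime) {a : ℤ} (ha : ¬ (p : ℤ) ∣ a) (k : ℕ) :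
    IsCoprime ((p : ℤ) ^ k) a :=
  (((Nat.prime_iff_prime_int.mp hp).coprime_iff_not_dvd).mpr ha).pow_left

lemma IsUnitSolution.pow_dvd_mul_sub_mul (hp : p.Prime) (hα : ¬ (p : ℤ) ∣ α 2)
    (hx : IsUnitSolution α p n x) (hmn : m ≤ n) (hprop : (p : ℤ) ^ m ∣ x 0 * t 1 - x 1 * t 0)
    (hxt : (p : ℤ) ^ n ∣ diagBilin α x t) (i : Fin 3) : (p : ℤ) ^ m ∣ x 0 * t i - t 0 * x i :=
  have hdvd : (p : ℤ) ^ m ∣ (p : ℤ) ^ n := pow_dvd_pow _ hmn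
  dvd_mul_sub_mul_of_dvd_diagBilin
    (isCoprime_pow_of_not_dvd hp ((Nat.prime_iff_prime_int.mp hp).not_dvd_mul hα (hx.1 2)) m)
    (hdvd.trans hx.2) hprop (hdvd.trans hxt) i

lemma IsUnitSolution.pow_dvd_diagBilin_self {ι : Type*} [Fintype ι] [DecidableEq ι]
    {α x t : ι → ℤ} {j : ι} (hp : p.Prime) (hx : IsUnitSolution α p n x)
    (hnm : n ≤ 2 * m) (hprop : ∀ i, (p : ℤ) ^ m ∣ x j * t i - t j * x i)
    (hxt : (p : ℤ) ^ n ∣ diagBilin α x t) : (p : ℤ) ^ n ∣ diagBilin α t t :=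
  dvd_diagBilin_self_of_dvd_mul_sub_mul (by rw [← pow_mul']; exact pow_dvd_pow _ hnm)
    (isCoprime_pow_of_not_dvd hp (hx.1 j) n) hx.2 hprop hxt

lemma forall_not_dvd_of_pow_dvd_mul_sub_mul {ι : Type*} {x t : ι → ℤ} {j : ι} (hp : p.Prime)
    (hx : ∀ i, ¬ (p : ℤ) ∣ x i) (hm : m ≠ 0)
    (hprop : ∀ i, (p : ℤ) ^ m ∣ x j * t i - t j * x i) (htj : ¬ (p : ℤ) ∣ t j) (i : ι) :
    ¬ (p : ℤ) ∣ t i := by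
  intro hti
  have hdvd := (dvd_pow_self (p : ℤ) hm).trans (hprop i)
  rw [dvd_sub_right (hti.mul_left _)] at hdvd
  exact (Nat.prime_iff_prime_int.mp hp).not_dvd_mul htj (hx i) hdvd

lemma IsUnitSolution.of_congruenceHom_eq (hp : p.Prime) (hα : ¬ (p : ℤ) ∣ α 2)
    (hx : IsUnitSolution α p n x) (hm : m ≠ 0) (hmn : m ≤ n) (hnm : n ≤ 2 * m)
    (ht : congruenceHom α x (p ^ m) (p ^ n) p t = congruenceHom α x (p ^ m) (p ^ n) p x) :
    IsUnitSolution α p n t := by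
  rw [← sub_eq_zero, ← map_sub, congruenceHom_eq_zero_iff] at ht
  obtain ⟨hprop, hxt, ht0⟩ := ht
  push_cast at hprop hxt
  rw [map_sub, dvd_sub_left hx.2] at hxt
  rw [Pi.sub_apply, Pi.sub_apply, mul_sub, mul_sub, mul_comm (x 1) (x 0), sub_sub_sub_cancel_right]
    at hprop
  have hprop := hx.pow_dvd_mul_sub_mul hp hα hmn hprop hxt
  exact ⟨forall_not_dvd_of_pow_dvd_mul_sub_mul hp hx.1 hm hprop
    ((dvd_iff_dvd_of_dvd_sub ht0).not.mpr (hx.1 0)), hx.pow_dvd_diagBilin_self hp hnm hprop hxt⟩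

lemma IsUnitSolution.pow_dvd_diagBilin_self_of_congruenceHom_eq_zero (hp : p.Prime)
    (hα : ¬ (p : ℤ) ∣ α 2) (hx : IsUnitSolution α p n x) (hmn : m ≤ n) (hnm : n ≤ 2 * m) {c : ℕ}
    (ht : congruenceHom α x (p ^ m) (p ^ n) c t = 0) : (p : ℤ) ^ n ∣ diagBilin α t t := by
  obtain ⟨hprop, hxt, -⟩ := congruenceHom_eq_zero_iff.mp ht
  push_cast at hprop hxt
  exact hx.pow_dvd_diagBilin_self hp hnm (hx.pow_dvd_mul_sub_mul hp hα hmn hprop hxt) hxt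

lemma eq_zero_of_dvd_diagBilin_self {ι : Type*} [Fintype ι] [DecidableEq ι] {α t : ι → ℤ}
    (haniso : ∀ u, diagBilin α u u = 0 → u = 0) {q : ℤ} {r : ℕ} (ht : ∀ i, |t i| ≤ r)
    (hr : ((∑ i, (α i).natAbs) * r ^ 2 : ℕ) < q) (hdvd : q ∣ diagBilin α t t) : t = 0 :=
  haniso t (Int.eq_zero_of_abs_lt_dvd hdvd ((abs_diagBilin_self_le α ht).trans_lt hr))

lemma mul_sq_div_succ_lt (A : ℕ) {s : ℕ} (hs : 0 < s) : A * (s / (A + 1)) ^ 2 < s ^ 2 := by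
  have hle := Nat.mul_div_le s (A + 1)
  obtain hr | hr := (s / (A + 1)).eq_zero_or_pos
  · rw [hr]
    positivity
  · calc A * (s / (A + 1)) ^ 2 < ((A + 1) * (s / (A + 1))) ^ 2 := by nlinarith [pow_pos hr 2]
      _ ≤ s ^ 2 := by gcongr

lemma pow_mul_pow_mul_self_le (hp : 0 < p) (n : ℕ) :
    p ^ (n - n / 2) * (p ^ n * p) ≤ (p * p ^ (n / 2)) ^ 3 :=
  calc p ^ (n - n / 2) * (p ^ n * p) = p ^ (n - n / 2 + n + 1) := by ring
    _ ≤ p ^ (3 + 3 * (n / 2)) := Nat.pow_le_pow_right hp (by lia)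
    _ = (p * p ^ (n / 2)) ^ 3 := by ring

theorem exists_isUnitSolution_le_of_anisotropic (hp : p.Prime) (hα : ¬ (p : ℤ) ∣ α 2)
    (haniso : ∀ u, diagBilin α u u = 0 → u = 0) (hn : n ≠ 0) (hx : IsUnitSolution α p n x) :
    ∃ y, IsUnitSolution α p n y ∧
      ∀ i, |y i| ≤ 2 * (p * (∑ i, (α i).natAbs + 1) : ℕ) ^ 3 * p ^ (n / 2) := by
  have : NeZero p := ⟨hp.ne_zero⟩
  set A := ∑ i, (α i).natAbs
  set s := p ^ (n / 2) with hs
  set N := (p * (A + 1)) ^ 3 with hN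
  have hspos : 0 < s := Nat.pow_pos hp.pos
  have hr : ((A * (s / (A + 1)) ^ 2 : ℕ) : ℤ) < (p : ℤ) ^ n := by
    have : s ^ 2 ≤ p ^ n := by rw [hs, ← pow_mul]; exact Nat.pow_le_pow_right hp.pos (by lia)
    exact_mod_cast (mul_sq_div_succ_lt A hspos).trans_le this
  have hcard : Nat.card (ZMod (p ^ (n - n / 2)) × ZMod (p ^ n) × ZMod p) ≤
      N * (s / (A + 1) + 1) ^ Nat.card (Fin 3) := by
    simp only [Nat.card_prod, Nat.card_zmod, Nat.card_fin]
    calc p ^ (n - n / 2) * (p ^ n * p) ≤ (p * s) ^ 3 := pow_mul_pow_mul_self_le hp.pos n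
      _ ≤ (p * ((A + 1) * (s / (A + 1) + 1))) ^ 3 := by
        gcongr
        exact (Nat.lt_mul_div_succ s A.succ_pos).le
      _ = N * (s / (A + 1) + 1) ^ 3 := by rw [hN, ← mul_pow, mul_assoc]
  obtain ⟨y, hyx, hy⟩ := exists_abs_le_of_injective_on_box
    (congruenceHom α x (p ^ (n - n / 2)) (p ^ n) p)
    (fun t ht htr => eq_zero_of_dvd_diagBilin_self haniso htr hr
      (hx.pow_dvd_diagBilin_self_of_congruenceHom_eq_zero hp hα (n.sub_le _) (by lia) ht))
    hcard x
  refine ⟨y, hx.of_congruenceHom_eq hp hα (by lia) (n.sub_le _) (by lia) hyx, fun i => ?_⟩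
  have hle : N * (s / (A + 1) + 1) ≤ 2 * N * s := by
    have : s / (A + 1) + 1 ≤ 2 * s := by have := s.div_le_self (A + 1); lia
    calc N * (s / (A + 1) + 1) ≤ N * (2 * s) := by gcongr
      _ = 2 * N * s := by ring
  exact (hy i).trans (by exact_mod_cast hle)

end Lattice

theorem exists_isUnitSolution_le (hp : p.Prime) (hα : ∀ i, ¬ (p : ℤ) ∣ α i) :
    ∃ C : ℕ, ∀ n, (∃ x, IsUnitSolution α p n x) →
      ∃ y, IsUnitSolution α p n y ∧ ∀ i, |y i| ≤ C * p ^ (n / 2) := by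
  by_cases hiso : ∃ v : Fin 3 → ℤ, (∀ i, ¬ (p : ℤ) ∣ v i) ∧ diagBilin α v v = 0
  · obtain ⟨v, hv, hBv⟩ := hiso
    refine ⟨∑ i, (v i).natAbs, fun n _ => ⟨v, ⟨hv, hBv ▸ dvd_zero _⟩, fun i => ?_⟩⟩
    exact (abs_le_sum_natAbs v i).trans
      (by exact_mod_cast Nat.le_mul_of_pos_right _ (Nat.pow_pos hp.pos))
  · refine ⟨2 * (p * (∑ i, (α i).natAbs + 1)) ^ 3, fun n ⟨x, hx⟩ => ?_⟩
    obtain rfl | hn := eq_or_ne n 0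
    · refine ⟨1, ⟨fun _ => (Nat.prime_iff_prime_int.mp hp).not_dvd_one, by simp⟩, fun i => ?_⟩
      have hC : 0 < 2 * (p * (∑ i, (α i).natAbs + 1)) ^ 3 * p ^ (0 / 2) := by
        have := hp.pos
        positivity
      rw [Pi.one_apply, abs_one]
      exact_mod_cast hC
    have hx1 : IsUnitSolution α p 1 x := ⟨hx.1, (pow_dvd_pow _ (by lia)).trans hx.2⟩
    have haniso (u : Fin 3 → ℤ) (hu : diagBilin α u u = 0) : u = 0 := by
      by_contra hu0
      exact hiso (exists_isotropic_forall_not_dvd hp hα hx1 hu0 hu)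
    exact_mod_cast exists_isUnitSolution_le_of_anisotropic hp (hα 2) haniso hn hx

lemma isUnitSolution_fin_three_iff (hp : p.Prime) {n : ℕ} :
    IsUnitSolution α p n x ↔ ¬ (p : ℤ) ∣ x 0 * x 1 * x 2 ∧
      (p : ℤ) ^ n ∣ α 0 * x 0 ^ 2 + α 1 * x 1 ^ 2 + α 2 * x 2 ^ 2 := by
  simp [IsUnitSolution, diagBilin_apply, Fin.forall_fin_succ, Fin.sum_univ_three,
    (Nat.prime_iff_prime_int.mp hp).dvd_mul, pow_two, mul_assoc, and_assoc]

end UnitSolution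

lemma pow_half_le_sqrt {a : ℝ} (ha : 1 ≤ a) (n : ℕ) : a ^ (n / 2) ≤ √(a ^ n) := by
  refine Real.le_sqrt_of_sq_le ?_
  rw [← pow_mul]
  exact pow_le_pow_right₀ ha (by lia)

lemma sqrt_le_rpow_half_add {q ε : ℝ} (hq : 1 ≤ q) (hε : 0 ≤ ε) : √q ≤ q ^ ((1 : ℝ) / 2 + ε) := by
  rw [Real.sqrt_eq_rpow]
  exact Real.rpow_le_rpow_of_exponent_le hq (le_add_of_nonneg_right hε)

theorem small_unit_solution_fixed_coefficients_general (p : ℕ) (hp : p.Prime) (α₁ α₂ α₃ : ℤ)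
    (h1 : ¬ (p : ℤ) ∣ α₁) (h2 : ¬ (p : ℤ) ∣ α₂) (h3 : ¬ (p : ℤ) ∣ α₃) :
    ∃ C : ℝ, 0 < C ∧ ∀ n : ℕ,
      (∃ x₁ x₂ x₃ : ℤ, ¬ (p : ℤ) ∣ x₁ * x₂ * x₃ ∧
          (p : ℤ) ^ n ∣ α₁ * x₁ ^ 2 + α₂ * x₂ ^ 2 + α₃ * x₃ ^ 2) →
        ∃ x₁ x₂ x₃ : ℤ, ¬ (p : ℤ) ∣ x₁ * x₂ * x₃ ∧
          (p : ℤ) ^ n ∣ α₁ * x₁ ^ 2 + α₂ * x₂ ^ 2 + α₃ * x₃ ^ 2 ∧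
          ((max (max |x₁| |x₂|) |x₃| : ℤ) : ℝ) ≤ C * √((p : ℝ) ^ n) := by
  have hα : ∀ i, ¬ (p : ℤ) ∣ ![α₁, α₂, α₃] i := by simp [Fin.forall_fin_succ, h1, h2, h3]
  obtain ⟨C, hC⟩ := exists_isUnitSolution_le hp hα
  refine ⟨C + 1, by positivity, fun n ⟨x₁, x₂, x₃, hx⟩ => ?_⟩
  obtain ⟨y, hy, hyC⟩ :=
    hC n ⟨![x₁, x₂, x₃], (isUnitSolution_fin_three_iff hp).mpr hx⟩
  obtain ⟨hunit, hdvd⟩ := (isUnitSolution_fin_three_iff hp).mp hy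
  have hmax : max (max |y 0| |y 1|) |y 2| ≤ C * (p : ℤ) ^ (n / 2) :=
    max_le (max_le (hyC 0) (hyC 1)) (hyC 2)
  refine ⟨y 0, y 1, y 2, hunit, hdvd, ?_⟩
  calc ((max (max |y 0| |y 1|) |y 2| : ℤ) : ℝ) ≤ C * (p : ℝ) ^ (n / 2) := by exact_mod_cast hmax
    _ ≤ (C + 1) * √((p : ℝ) ^ n) := by
      gcongr
      · exact le_add_of_nonneg_right zero_le_one
      · exact pow_half_le_sqrt (by exact_mod_cast hp.one_le) n

/-- For fixed `p` and fixed coefficients coprime to `p`, for all large `n`: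
whenever the congruence `α₁x₁² + α₂x₂² + α₃x₃² ≡ 0 (mod pⁿ)` has a solution with all
coordinates coprime to `p`, it has such a solution of size `≤ C · (pⁿ)^{1/2+ε}`. -/
theorem small_unit_solution_fixed_coefficients
    (ε : ℝ) (hε : 0 < ε) (p : ℕ) (hp : p.Prime) (hp2 : 2 < p)
    (α₁ α₂ α₃ : ℤ)
    (h1 : ¬ (p : ℤ) ∣ α₁) (h2 : ¬ (p : ℤ) ∣ α₂) (h3 : ¬ (p : ℤ) ∣ α₃) :
    ∃ C : ℝ, 0 < C ∧ ∃ n₀ : ℕ, ∀ n : ℕ, n₀ ≤ n →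
      ((∃ x₁ x₂ x₃ : ℤ, ¬ (p : ℤ) ∣ x₁ * x₂ * x₃ ∧
          (p : ℤ) ^ n ∣ α₁ * x₁ ^ 2 + α₂ * x₂ ^ 2 + α₃ * x₃ ^ 2) →
        ∃ x₁ x₂ x₃ : ℤ, ¬ (p : ℤ) ∣ x₁ * x₂ * x₃ ∧
          (p : ℤ) ^ n ∣ α₁ * x₁ ^ 2 + α₂ * x₂ ^ 2 + α₃ * x₃ ^ 2 ∧
          ((max (max |x₁| |x₂|) |x₃| : ℤ) : ℝ) ≤ C * ((p : ℝ) ^ n) ^ ((1 : ℝ) / 2 + ε)) := by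
  obtain ⟨C, hC, h⟩ := small_unit_solution_fixed_coefficients_general p hp α₁ α₂ α₃ h1 h2 h3
  refine ⟨C, hC, 0, fun n _ hx => ?_⟩
  obtain ⟨x₁, x₂, x₃, hunit, hdvd, hle⟩ := h n hx
  have hq : 1 ≤ (p : ℝ) ^ n := one_le_pow₀ (by exact_mod_cast hp.one_le)
  exact ⟨x₁, x₂, x₃, hunit, hdvd, hle.trans (by gcongr; exact sqrt_le_rpow_half_add hq hε.le)⟩
end

section
/- Let ε > 0 be fixed and p > 2 be a fixed prime. Then there exist a constant C > 0 (depending only on p and ε) and n₀ ∈ ℕ such that for all n ≥ n₀, writing q := pⁿ, and for ALL integers α₁, α₂, α₃ coprime to p: if there exists (x₁,x₂,x₃) ∈ ℤ³ with p ∤ x₁x₂x₃ and q | α₁x₁²+α₂x₂²+α₃x₃², then there exists such a triple with max(|x₁|,|x₂|,|x₃|) ≤ C · q^{11/18+ε}. -/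
/-!
A diagonal form with a unit zero modulo `p ^ n` becomes, in coordinates given by an integer matrix
of unit determinant, the conic `D * y 1 ^ 2 + y 0 * y 2`. Let `m = ⌈n / 2⌉`. For every `t` divisible
by `p`, the vectors that are congruent to a multiple of the conic point `(1, t, -D * t ^ 2)` modulo
`p ^ m` and lie on its tangent line modulo `p ^ (2 * m)` form a lattice of index `p ^ (3 * m)`, on
which the conic vanishes modulo `p ^ (2 * m)`. A vector of this lattice outside a certain sublattice
of index `p` is a unit zero.

If the lattice has no nonzero vector much shorter than `p ^ m`, a pigeonhole argument gives a vector
outside the sublattice of size about `p ^ m`. A nonzero vector that is too short yields, after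
division by a power of `p`, a short approximate point of the conic near parameter `t`. Three short
points with nearby parameters have a determinant that is divisible by a high power of `p`, hence
zero, while three dependent points of a conic cannot be distinct. So few parameters `t` are bad, and
a good one gives the exponent `1 / 2 + o(1)`.
-/

section LinearAlgebra

open scoped Matrix

theorem exists_eq_pow_smul_primitive {ι R : Type*} [CommRing R] [IsDomain R] [WfDvdMonoid R]
    {p : R} (hp : ¬ IsUnit p) {v : ι → R} (hv : v ≠ 0) :
    ∃ (k : ℕ) (w : ι → R), v = p ^ k • w ∧ ¬ ∀ i, p ∣ w i := by
  classical
  have hex : ∃ K, ¬ ∀ i, p ^ (K + 1) ∣ v i := by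
    obtain ⟨i, hi⟩ := Function.ne_iff.1 hv
    obtain ⟨K, hK⟩ := FiniteMultiplicity.of_not_isUnit hp hi
    exact ⟨K, fun h => hK (h i)⟩
  have hpow : ∀ i, p ^ Nat.find hex ∣ v i := by
    rcases h : Nat.find hex with _ | k
    · simp
    · exact not_not.1 (Nat.find_min hex (h ▸ k.lt_succ_self))
  choose w hw using hpow
  refine ⟨Nat.find hex, w, funext hw, fun h => Nat.find_spec hex fun i => ?_⟩
  rw [hw i, pow_succ]
  exact mul_dvd_mul_left _ (h i)

variable {ι R : Type*} [Fintype ι] [DecidableEq ι] [CommRing R]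

theorem forall_dvd_of_forall_dvd_mulVec {p : R} (hp : Prime p) {A : Matrix ι ι R}
    (hA : ¬ p ∣ A.det) {v : ι → R} (h : ∀ i, p ∣ (A *ᵥ v) i) (i : ι) : p ∣ v i := by
  refine (hp.dvd_or_dvd (a := A.det) ?_).resolve_left hA
  have hadj : A.det * v i = (A.adjugate *ᵥ (A *ᵥ v)) i := by
    rw [Matrix.mulVec_mulVec, Matrix.adjugate_mul, Matrix.smul_mulVec, Matrix.one_mulVec,
      Pi.smul_apply, smul_eq_mul]
  rw [hadj]
  exact Finset.dvd_sum fun j _ => (h j).mul_left _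

theorem not_dvd_apply_of_dvd_mulVec {p : R} (hp : Prime p) {A : Matrix ι ι R}
    (hA : ¬ p ∣ A.det) {x y : ι → R} {j : ι} (hx : ∀ i ≠ j, p ∣ (A *ᵥ x) i)
    (hy : ∀ i ≠ j, p ∣ (A *ᵥ y) i) (hxj : ¬ p ∣ (A *ᵥ x) j) {i : ι}
    (hyi : ¬ p ∣ y i) : ¬ p ∣ x i := by
  have hcomb : p ∣ ((A *ᵥ y) j • x - (A *ᵥ x) j • y) i := by
    refine forall_dvd_of_forall_dvd_mulVec hp hA (fun k => ?_) i
    simp only [Matrix.mulVec_sub, Matrix.mulVec_smul, Pi.sub_apply, Pi.smul_apply, smul_eq_mul]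
    rcases eq_or_ne k j with rfl | hk
    · rw [mul_comm, sub_self]
      exact dvd_zero p
    · exact dvd_sub ((hx k hk).mul_left _) ((hy k hk).mul_left _)
  intro hxi
  have hmul : p ∣ (A *ᵥ x) j * y i := (dvd_sub_right (hxi.mul_left _)).1 hcomb
  exact (hp.dvd_or_dvd hmul).elim hxj hyi

theorem exists_mulVec_eq_det_smul (A : Matrix ι ι R) (y : ι → R) : ∃ v, A *ᵥ v = A.det • y :=
  ⟨A.adjugate *ᵥ y, by
    rw [Matrix.mulVec_mulVec, Matrix.mul_adjugate, Matrix.smul_mulVec, Matrix.one_mulVec]⟩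

theorem prod_dvd_det_of_forall_dvd {d : ι → R} {A : Matrix ι ι R} (h : ∀ i j, d j ∣ A i j) :
    ∏ j, d j ∣ A.det := by
  choose B hB using h
  refine ⟨(Matrix.of B).det, ?_⟩
  rw [← Matrix.det_mul_row]
  exact congrArg _ (Matrix.ext hB)

theorem det_of_mulVec (A : Matrix ι ι R) (v : ι → ι → R) :
    (Matrix.of fun k => A *ᵥ v k).det = A.det * (Matrix.of v).det := by
  rw [← Matrix.det_transpose (Matrix.of v), ← Matrix.det_mul, ← Matrix.det_transpose]
  rfl

end LinearAlgebra

section ShortVectors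

variable {ι κ : Type*} [Fintype ι]

/-- The lattice of the vectors whose image under the integer matrix `A` has its `i`-th coordinate
divisible by `d i`, for every `i`. -/
def congruenceLattice (A : Matrix κ ι ℤ) (d : κ → ℤ) : AddSubgroup (ι → ℤ) :=
  (AddSubgroup.pi Set.univ fun i => AddSubgroup.zmultiples (d i)).comap
    A.mulVecLin.toAddMonoidHom

theorem mem_congruenceLattice {A : Matrix κ ι ℤ} {d : κ → ℤ} {v : ι → ℤ} :
    v ∈ congruenceLattice A d ↔ ∀ i, d i ∣ A.mulVec v i := by
  simp [congruenceLattice, AddSubgroup.mem_pi, Int.mem_zmultiples_iff]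

theorem congruenceLattice_lt [DecidableEq ι] {A : Matrix ι ι ℤ} {d d' : ι → ℤ}
    (hd : ∀ i, d' i ∣ d i) {j : ι} (hj : ¬ d j ∣ A.det * d' j) :
    congruenceLattice A d < congruenceLattice A d' := by
  refine SetLike.lt_iff_le_and_exists.2 ⟨fun v hv => ?_, ?_⟩
  · exact mem_congruenceLattice.2 fun i => (hd i).trans (mem_congruenceLattice.1 hv i)
  · obtain ⟨v, hv⟩ := exists_mulVec_eq_det_smul A (Pi.single j (d' j))
    refine ⟨v, mem_congruenceLattice.2 fun i => ?_, fun h => hj ?_⟩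
    · rcases eq_or_ne i j with rfl | hij
      · simp [hv]
      · simp [hv, hij]
    · simpa [hv] using mem_congruenceLattice.1 h j

theorem congruenceLattice_index_dvd [Fintype κ] (A : Matrix κ ι ℤ) (d : κ → ℤ) :
    (congruenceLattice A d).index ∣ ∏ i, (d i).natAbs := by
  rw [congruenceLattice, AddSubgroup.index_comap]
  simpa only [AddSubgroup.index_pi, Int.index_zmultiples] using
    (AddSubgroup.pi Set.univ fun i => AddSubgroup.zmultiples (d i)).relIndex_dvd_index_of_normal
      A.mulVecLin.toAddMonoidHom.range

/-- The `i`-th of `K` boxes along `x` starts at the integer point nearest below `(i / K) • x`; two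
of these boxes differ by a vector `y` that is close enough to `((j - i) / K) • x` to make `x - y`
shorter than `x`. -/
theorem abs_sub_lt_of_box_translates {x X h K i j b b' : ℤ} (hx : |x| ≤ X) (hKX : K * h ≤ X)
    (hi : 0 ≤ i) (hij : i < j) (hjK : j < K) (hb : |b' - b| < h) :
    |x - (j * x / K + b' - (i * x / K + b))| < X := by
  have hK : 0 < K := by linarith
  have hscaled : K * (x - (j * x / K + b' - (i * x / K + b))) =
      (K - (j - i)) * x + (j * x % K - i * x % K) - K * (b' - b) := by
    linear_combination Int.mul_ediv_add_emod (i * x) K - Int.mul_ediv_add_emod (j * x) K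
  have hmain : |(K - (j - i)) * x| ≤ (K - 1) * X := by
    rw [abs_mul, abs_of_nonneg (by linarith)]
    exact mul_le_mul (by linarith) hx (abs_nonneg x) (by linarith)
  have hround : |j * x % K - i * x % K| < K := by
    rw [abs_lt]
    constructor <;> linarith [Int.emod_nonneg (i * x) hK.ne', Int.emod_lt_of_pos (i * x) hK,
      Int.emod_nonneg (j * x) hK.ne', Int.emod_lt_of_pos (j * x) hK]
  have hbox : |K * (b' - b)| ≤ K * (h - 1) := by
    rw [abs_mul, abs_of_pos hK]
    exact mul_le_mul_of_nonneg_left (Int.le_sub_one_of_lt hb) hK.le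
  refine lt_of_mul_lt_mul_left (a := K) ?_ hK.le
  calc K * |x - (j * x / K + b' - (i * x / K + b))|
      = |(K - (j - i)) * x + (j * x % K - i * x % K) - K * (b' - b)| := by
        rw [← hscaled, abs_mul, abs_of_pos hK]
    _ ≤ |(K - (j - i)) * x| + |j * x % K - i * x % K| + |K * (b' - b)| :=
        (abs_sub _ _).trans (add_le_add_left (abs_add_le _ _) _)
    _ < (K - 1) * X + K + K * (h - 1) := by linarith
    _ ≤ K * X := by linarith

theorem mul_pow_card_le_index_of_shortest {Λ L : AddSubgroup (ι → ℤ)} [Λ.FiniteIndex]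
    (hΛL : Λ ≤ L) {h K : ℕ} (hmin : ∀ v ∈ Λ, (∀ i, |v i| < h) → v = 0) {x : ι → ℤ} {X : ℤ}
    (hxL : x ∈ L) (hxΛ : x ∉ Λ) (hxX : ∀ i, |x i| ≤ X)
    (hshort : ∀ y ∈ L, y ∉ Λ → ∃ i, X ≤ |y i|) (hK : 1 < K → K * h ≤ X) :
    K * h ^ Fintype.card ι ≤ Λ.index := by
  classical
  let f : Fin K × (ι → Fin h) → ι → ℤ := fun s c => s.1 * x c / K + (s.2 c : ℕ)
  have hbox : ∀ b b' : Fin h, |((b' : ℕ) : ℤ) - (b : ℕ)| < h := fun b b' => by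
    rw [abs_lt]; omega
  have hlt : ∀ s s', s.1 < s'.1 → f s' - f s ∉ Λ := fun s s' hss hmem => by
    obtain ⟨c, hc⟩ := hshort (x - (f s' - f s)) (L.sub_mem hxL (hΛL hmem))
      fun h => hxΛ (by simpa using Λ.add_mem h hmem)
    refine hc.not_gt (abs_sub_lt_of_box_translates (hxX c) (hK ?_) ?_ ?_ ?_ (hbox _ _)) <;> omega
  have hinj : Function.Injective fun s => (f s : (ι → ℤ) ⧸ Λ) := fun s s' hss => by
    have hmem : f s' - f s ∈ Λ := by
      rw [sub_eq_neg_add]; exact QuotientAddGroup.eq.1 hss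
    have hfst : s.1 = s'.1 := by
      rcases lt_trichotomy s.1 s'.1 with hlt' | heq | hgt
      · exact absurd hmem (hlt s s' hlt')
      · exact heq
      · exact absurd (by simpa using Λ.neg_mem hmem) (hlt s' s hgt)
    have hdiff : ∀ c, (f s' - f s) c = ((s'.2 c : ℕ) : ℤ) - (s.2 c : ℕ) := fun c => by
      simp only [Pi.sub_apply, f, hfst]; ring
    have hzero := hmin _ hmem fun c => by rw [hdiff]; exact hbox _ _
    refine Prod.ext hfst (funext fun c => Fin.ext ?_)
    have hc := hdiff c
    rw [hzero, Pi.zero_apply] at hc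
    omega
  have : Fintype ((ι → ℤ) ⧸ Λ) := Fintype.ofFinite _
  simpa [AddSubgroup.index_eq_card, Nat.card_eq_fintype_card] using
    Fintype.card_le_of_injective _ hinj

/-- If the shortest vector of `L` outside `Λ` were longer than allowed, translates of a box along it
would be disjoint modulo `Λ` and too many. -/
theorem exists_mem_notMem_abs_mul_pow_lt {Λ L : AddSubgroup (ι → ℤ)} [Λ.FiniteIndex]
    (hΛL : Λ < L) {h : ℕ} (hh : 0 < h) (hmin : ∀ v ∈ Λ, (∀ i, |v i| < h) → v = 0) :
    ∃ x ∈ L, x ∉ Λ ∧ ∀ i, |x i| * h ^ Fintype.card ι < 2 * h * Λ.index := by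
  let size : (ι → ℤ) → ℕ := fun y => Finset.univ.sup fun i => (y i).natAbs
  obtain ⟨x, ⟨hxL, hxΛ⟩, hxmin⟩ := exists_minimalFor_of_wellFoundedLT (fun y => y ∈ L ∧ y ∉ Λ) size
    (SetLike.exists_of_lt hΛL)
  have hxX : ∀ i, |x i| ≤ size x := fun i => by
    rw [Int.abs_eq_natAbs]
    exact_mod_cast Finset.le_sup (f := fun i => (x i).natAbs) (Finset.mem_univ i)
  have hpos : 0 < size x := Nat.pos_of_ne_zero fun hzero => by
    have hx0 : x = 0 := funext fun i => abs_nonpos_iff.1 ((hxX i).trans_eq (by simp [hzero]))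
    exact hxΛ (hx0 ▸ Λ.zero_mem)
  have hshort : ∀ y ∈ L, y ∉ Λ → ∃ i, (size x : ℤ) ≤ |y i| := by
    intro y hyL hyΛ
    by_contra! hlt
    have hsize : size y < size x := (Finset.sup_lt_iff hpos).2 fun i _ => by
      have := hlt i
      rwa [Int.abs_eq_natAbs, Nat.cast_lt] at this
    exact hsize.not_ge (hxmin ⟨hyL, hyΛ⟩ hsize.le)
  obtain ⟨K, hKh, hsizeK⟩ : ∃ K, (1 < K → K * h ≤ size x) ∧ size x < 2 * K * h := by
    rcases lt_or_ge (size x) h with hsmall | hlarge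
    · exact ⟨1, by simp, by omega⟩
    · refine ⟨size x / h, fun _ => Nat.div_mul_le_self _ _, ?_⟩
      have hKpos : 0 < size x / h := Nat.div_pos hlarge hh
      have := Nat.lt_mul_div_succ (size x) hh
      nlinarith
  have hpack := mul_pow_card_le_index_of_shortest hΛL.le hmin hxL hxΛ hxX hshort
    (K := K) (by exact_mod_cast hKh)
  refine ⟨x, hxL, hxΛ, fun i => ?_⟩
  have hsize : size x * h ^ Fintype.card ι < 2 * h * Λ.index :=
    calc size x * h ^ Fintype.card ι < 2 * K * h * h ^ Fintype.card ι := by gcongr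
      _ = 2 * h * (K * h ^ Fintype.card ι) := by ring
      _ ≤ 2 * h * Λ.index := by gcongr
  calc |x i| * (h : ℤ) ^ Fintype.card ι ≤ size x * (h : ℤ) ^ Fintype.card ι := by
        gcongr; exact hxX i
    _ < 2 * h * Λ.index := by exact_mod_cast hsize

end ShortVectors

section Conic

open scoped Matrix

/-- The conic with affine points `(1, t, -D * t ^ 2)`, to which a diagonal ternary form with a unit
zero is reduced. -/
def conicForm (D : ℤ) (y : Fin 3 → ℤ) : ℤ :=
  D * y 1 ^ 2 + y 0 * y 2

/-- The automorphism of `conicForm D` that moves the point with parameter `t` to `(1, 0, 0)`; the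
last row of the matrix is the tangent form at that point. -/
def conicShear (D t : ℤ) : Matrix (Fin 3) (Fin 3) ℤ :=
  !![1, 0, 0; -t, 1, 0; -(D * t ^ 2), 2 * D * t, 1]

theorem det_conicShear (D t : ℤ) : (conicShear D t).det = 1 := by
  simp [conicShear, Matrix.det_fin_three]

theorem conicShear_mulVec (D t : ℤ) (y : Fin 3 → ℤ) :
    conicShear D t *ᵥ y =
      ![y 0, y 1 - t * y 0, y 2 + 2 * D * t * y 1 - D * t ^ 2 * y 0] := by
  rw [conicShear, Matrix.cons_mulVec, Matrix.cons_mulVec, Matrix.cons_mulVec, Matrix.empty_mulVec]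
  refine Matrix.vec3_eq ?_ ?_ ?_ <;> simp only [Matrix.vec3_dotProduct, Matrix.cons_val] <;> ring

theorem conicForm_conicShear_mulVec (D t : ℤ) (y : Fin 3 → ℤ) :
    conicForm D (conicShear D t *ᵥ y) = conicForm D y := by
  simp only [conicForm, conicShear_mulVec, Matrix.cons_val]
  ring

theorem pow_two_mul_dvd_conicForm {p D : ℤ} {l : ℕ} {y : Fin 3 → ℤ} (h1 : p ^ l ∣ y 1)
    (h2 : p ^ (2 * l) ∣ y 2) : p ^ (2 * l) ∣ conicForm D y := by
  rw [mul_comm, pow_mul] at h2 ⊢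
  exact dvd_add ((pow_dvd_pow_of_dvd h1 2).mul_left D) (h2.mul_left _)

theorem pow_dvd_det_of_conicForm {p D t : ℤ} (hp : Prime p) {j : ℕ} {y : Fin 3 → Fin 3 → ℤ}
    (hy0 : ∀ k, ¬ p ∣ y k 0) (hy1 : ∀ k, p ^ j ∣ y k 1 - t * y k 0)
    (hQ : ∀ k, p ^ (2 * j) ∣ conicForm D (y k)) : p ^ (3 * j) ∣ (Matrix.of y).det := by
  have hz : ∀ k, conicShear D t *ᵥ y k =
      ![y k 0, y k 1 - t * y k 0, y k 2 + 2 * D * t * y k 1 - D * t ^ 2 * y k 0] :=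
    fun k => conicShear_mulVec D t (y k)
  have htangent : ∀ k, p ^ (2 * j) ∣ y k 2 + 2 * D * t * y k 1 - D * t ^ 2 * y k 0 := fun k => by
    refine hp.pow_dvd_of_dvd_mul_left _ (hy0 k) ?_
    have hsq : p ^ (2 * j) ∣ D * (y k 1 - t * y k 0) ^ 2 := by
      rw [mul_comm 2 j, pow_mul]
      exact (pow_dvd_pow_of_dvd (hy1 k) 2).mul_left D
    have hform := hQ k
    rw [← conicForm_conicShear_mulVec D t, hz] at hform
    exact (dvd_add_right hsq).1 hform
  have hdet := prod_dvd_det_of_forall_dvd (A := Matrix.of fun k => conicShear D t *ᵥ y k)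
    (d := ![1, p ^ j, p ^ (2 * j)]) fun k i => by
      rw [Matrix.of_apply, hz]
      fin_cases i
      exacts [one_dvd _, hy1 k, htangent k]
  rw [det_of_mulVec, det_conicShear, one_mul] at hdet
  refine (dvd_of_eq ?_).trans hdet
  simp only [Fin.prod_univ_three, Matrix.cons_val]
  ring

/-- With `B` the polar form of the conic, the relation gives `p ^ (2 * l) ∣ B(u, v)`, and `B(u, v)`
is `-D * (u 1 * v 0 - v 1 * u 0) ^ 2` up to a unit. -/
theorem pow_dvd_cross_of_conicForm {p D : ℤ} (hp : Prime p) (hD : ¬ p ∣ D) {l : ℕ}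
    {u v w : Fin 3 → ℤ} {a b c : ℤ} (ha : ¬ p ∣ a) (hb : ¬ p ∣ b)
    (hrel : ∀ i, a * u i + b * v i + c * w i = 0)
    (hu : p ^ (2 * l) ∣ conicForm D u) (hv : p ^ (2 * l) ∣ conicForm D v)
    (hw : p ^ (2 * l) ∣ conicForm D w) : p ^ l ∣ u 1 * v 0 - v 1 * u 0 := by
  have hpolar : p ^ (2 * l) ∣ 2 * D * u 1 * v 1 + u 0 * v 2 + v 0 * u 2 := by
    refine hp.pow_dvd_of_dvd_mul_left _ ha (hp.pow_dvd_of_dvd_mul_left _ hb ?_)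
    have hexpand : b * (a * (2 * D * u 1 * v 1 + u 0 * v 2 + v 0 * u 2)) =
        c ^ 2 * conicForm D w - a ^ 2 * conicForm D u - b ^ 2 * conicForm D v := by
      simp only [conicForm]
      linear_combination D * (a * u 1 + b * v 1 - c * w 1) * hrel 1 + (a * u 2 + b * v 2) * hrel 0
        - c * w 0 * hrel 2
    rw [hexpand]
    exact dvd_sub (dvd_sub (hw.mul_left _) (hu.mul_left _)) (hv.mul_left _)
  have hsq : p ^ (2 * l) ∣ D * (u 1 * v 0 - v 1 * u 0) ^ 2 := by
    have hcross : D * (u 1 * v 0 - v 1 * u 0) ^ 2 = v 0 ^ 2 * conicForm D u +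
        u 0 ^ 2 * conicForm D v - u 0 * v 0 * (2 * D * u 1 * v 1 + u 0 * v 2 + v 0 * u 2) := by
      simp only [conicForm]
      ring
    rw [hcross]
    exact dvd_sub (dvd_add (hu.mul_left _) (hv.mul_left _)) (hpolar.mul_left _)
  rw [← Int.pow_dvd_pow_iff two_ne_zero, ← pow_mul, mul_comm l]
  exact hp.pow_dvd_of_dvd_mul_left _ hD hsq

theorem exists_pow_dvd_cross_of_det_eq_zero {p D : ℤ} (hp : Prime p) (hD : ¬ p ∣ D) {l : ℕ}
    {y : Fin 3 → Fin 3 → ℤ} (hy0 : ∀ k, ¬ p ∣ y k 0)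
    (hQ : ∀ k, p ^ (2 * l) ∣ conicForm D (y k)) (hdet : (Matrix.of y).det = 0) :
    ∃ i k, i ≠ k ∧ p ^ l ∣ y i 1 * y k 0 - y k 1 * y i 0 := by
  obtain ⟨b, hb, hrelb⟩ := Matrix.exists_vecMul_eq_zero_iff.2 hdet
  obtain ⟨k, c, rfl, hprim⟩ := exists_eq_pow_smul_primitive hp.not_isUnit hb
  have hrel : ∀ i, c 0 * y 0 i + c 1 * y 1 i + c 2 * y 2 i = 0 := fun i => by
    rw [Matrix.smul_vecMul, smul_eq_zero_iff_right (pow_ne_zero k hp.ne_zero)] at hrelb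
    simpa [Matrix.vecMul, dotProduct, Fin.sum_univ_three] using congrFun hrelb i
  have hsum : p ∣ c 0 * y 0 0 + c 1 * y 1 0 + c 2 * y 2 0 := hrel 0 ▸ dvd_zero p
  have hcancel : ∀ i, p ∣ c i * y i 0 → p ∣ c i := fun i h =>
    (hp.dvd_or_dvd h).resolve_right (hy0 i)
  by_cases h0 : p ∣ c 0
  · have hsum12 : p ∣ c 1 * y 1 0 + c 2 * y 2 0 := by
      rwa [add_assoc, dvd_add_right (h0.mul_right _)] at hsum
    have h1 : ¬ p ∣ c 1 := fun h1 => hprim fun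
      | 0 => h0
      | 1 => h1
      | 2 => hcancel 2 ((dvd_add_right (h1.mul_right _)).1 hsum12)
    have h2 : ¬ p ∣ c 2 := fun h2 => h1 (hcancel 1 ((dvd_add_left (h2.mul_right _)).1 hsum12))
    exact ⟨1, 2, by decide, pow_dvd_cross_of_conicForm hp hD (c := c 0) h1 h2
      (fun i => by linear_combination hrel i) (hQ 1) (hQ 2) (hQ 0)⟩
  by_cases h1 : p ∣ c 1
  · have h2 : ¬ p ∣ c 2 := fun h2 => h0 (hcancel 0 ((dvd_add_left (h1.mul_right _)).1
      ((dvd_add_left (h2.mul_right _)).1 hsum)))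
    exact ⟨0, 2, by decide, pow_dvd_cross_of_conicForm hp hD (c := c 1) h0 h2
      (fun i => by linear_combination hrel i) (hQ 0) (hQ 2) (hQ 1)⟩
  · exact ⟨0, 1, by decide, pow_dvd_cross_of_conicForm hp hD h0 h1 hrel (hQ 0) (hQ 1) (hQ 2)⟩

theorem exists_pow_dvd_param_sub_of_det_eq_zero {p D : ℤ} (hp : Prime p) (hD : ¬ p ∣ D) {l : ℕ}
    {y : Fin 3 → Fin 3 → ℤ} {t : Fin 3 → ℤ} (hy0 : ∀ k, ¬ p ∣ y k 0)
    (hy1 : ∀ k, p ^ l ∣ y k 1 - t k * y k 0) (hQ : ∀ k, p ^ (2 * l) ∣ conicForm D (y k))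
    (hdet : (Matrix.of y).det = 0) : ∃ i k, i ≠ k ∧ p ^ l ∣ t i - t k := by
  obtain ⟨i, k, hik, hcross⟩ := exists_pow_dvd_cross_of_det_eq_zero hp hD hy0 hQ hdet
  refine ⟨i, k, hik, hp.pow_dvd_of_dvd_mul_left _ (hy0 i) (hp.pow_dvd_of_dvd_mul_left _ (hy0 k) ?_)⟩
  have hparam : y k 0 * (y i 0 * (t i - t k)) = (y i 1 * y k 0 - y k 1 * y i 0)
      - (y i 1 - t i * y i 0) * y k 0 + (y k 1 - t k * y k 0) * y i 0 := by ring
  rw [hparam]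
  exact dvd_add (dvd_sub hcross ((hy1 i).mul_right _)) ((hy1 k).mul_right _)

end Conic

section Obstructions

open scoped Matrix

theorem card_le_of_forall_tuple {d A N K : ℕ} (hA : 0 < A) {S : Finset ℕ}
    (hS : S ⊆ Finset.range (N * K))
    (h : ∀ t : Fin (d + 1) → ℕ, (∀ i, t i ∈ S) → (∀ i k, t i ≡ t k [MOD A]) →
      ∃ i k, i ≠ k ∧ t i ≡ t k [MOD N]) :
    S.card ≤ d * (A * K) := by
  by_contra! hlt
  have hmaps : ∀ s ∈ S, (s % A, s / N) ∈ Finset.range A ×ˢ Finset.range K := fun s hs => by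
    simp only [Finset.mem_product, Finset.mem_range]
    exact ⟨Nat.mod_lt s hA, Nat.div_lt_of_lt_mul (Finset.mem_range.1 (hS hs))⟩
  obtain ⟨⟨u, v⟩, -, hfiber⟩ := Finset.exists_lt_card_fiber_of_mul_lt_card_of_maps_to hmaps
    (n := d) (by simpa [mul_comm d] using hlt)
  let t := Finset.orderEmbOfCardLe _ hfiber
  have ht : ∀ i, t i ∈ S ∧ t i % A = u ∧ t i / N = v := fun i => by
    have hi := Finset.orderEmbOfCardLe_mem _ hfiber i
    rw [Finset.mem_filter, Prod.mk.injEq] at hi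
    exact hi
  obtain ⟨i, k, hik, hmod⟩ := h t (fun i => (ht i).1) fun i k => (ht i).2.1.trans (ht k).2.1.symm
  refine hik (t.injective ?_)
  rw [← Nat.mod_add_div (t i) N, ← Nat.mod_add_div (t k) N, hmod, (ht i).2.2, (ht k).2.2]

/-- Some integer vector shorter than `p ^ a` is sent by `A` to a point that lies on the conic modulo
`p ^ (2 * l)` and has parameter `t` modulo `p ^ l`. Such a point is what a short vector of the
tangent lattice at `t` provides. -/
def HasShortPoint (p : ℕ) (A : Matrix (Fin 3) (Fin 3) ℤ) (D : ℤ) (l a : ℕ) (t : ℤ) : Prop :=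
  ∃ w : Fin 3 → ℤ, (∀ i, |w i| < (p : ℤ) ^ a) ∧ ¬ (p : ℤ) ∣ (A *ᵥ w) 0 ∧
    (p : ℤ) ^ l ∣ (A *ᵥ w) 1 - t * (A *ᵥ w) 0 ∧ (p : ℤ) ^ (2 * l) ∣ conicForm D (A *ᵥ w)

variable {p : ℕ} {A : Matrix (Fin 3) (Fin 3) ℤ} {D : ℤ}

theorem exists_pow_dvd_sub_of_hasShortPoint (hp : p.Prime) (hA : ¬ (p : ℤ) ∣ A.det)
    (hD : ¬ (p : ℤ) ∣ D) {l a : ℕ} (hal : a < l) {t : Fin 3 → ℤ}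
    (ht : ∀ i k, (p : ℤ) ^ (a + 1) ∣ t i - t k) (hshort : ∀ k, HasShortPoint p A D l a (t k)) :
    ∃ i k, i ≠ k ∧ (p : ℤ) ^ l ∣ t i - t k := by
  have hpz : Prime (p : ℤ) := Nat.prime_iff_prime_int.1 hp
  choose w hw hw0 hw1 hQ using hshort
  refine exists_pow_dvd_param_sub_of_det_eq_zero hpz hD hw0 hw1 hQ ?_
  have hcommon : ∀ k, (p : ℤ) ^ (a + 1) ∣ (A *ᵥ w k) 1 - t 0 * (A *ᵥ w k) 0 := fun k => by
    have hsplit : (A *ᵥ w k) 1 - t 0 * (A *ᵥ w k) 0 =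
        ((A *ᵥ w k) 1 - t k * (A *ᵥ w k) 0) + (t k - t 0) * (A *ᵥ w k) 0 := by ring
    rw [hsplit]
    exact dvd_add ((pow_dvd_pow _ hal).trans (hw1 k)) ((ht k 0).mul_right _)
  have hdvd : (p : ℤ) ^ (3 * (a + 1)) ∣ (Matrix.of w).det := by
    refine hpz.pow_dvd_of_dvd_mul_left _ hA ?_
    rw [← det_of_mulVec]
    exact pow_dvd_det_of_conicForm hpz hw0 hcommon
      fun k => (pow_dvd_pow _ (by omega)).trans (hQ k)
  have hsmall : |(Matrix.of w).det| < (p : ℤ) ^ (3 * (a + 1)) := by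
    have hp2 : (2 : ℤ) ^ 3 ≤ p ^ 3 := pow_le_pow_left₀ (by norm_num) (mod_cast hp.two_le) 3
    have hpos : (0 : ℤ) < p ^ (3 * a) := pow_pos (mod_cast hp.pos) _
    calc |(Matrix.of w).det| ≤ 6 * ((p : ℤ) ^ a) ^ 3 := by
          simpa [Nat.factorial] using Matrix.det_le (abv := AbsoluteValue.abs)
            (A := Matrix.of w) fun k i => (hw k i).le
      _ = 6 * (p : ℤ) ^ (3 * a) := by ring
      _ < p ^ 3 * p ^ (3 * a) := mul_lt_mul_of_pos_right (by linarith) hpos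
      _ = p ^ (3 * (a + 1)) := by ring
  rw [det_of_mulVec, Int.eq_zero_of_abs_lt_dvd hdvd hsmall, mul_zero]

open scoped Classical in
theorem card_filter_hasShortPoint_le (hp : p.Prime) (hA : ¬ (p : ℤ) ∣ A.det) (hD : ¬ (p : ℤ) ∣ D)
    {l a : ℕ} (hal : a ≤ l) (k : ℕ) :
    ((Finset.range (p ^ (l + k))).filter fun s : ℕ => HasShortPoint p A D (l + 1) a (p * s)).card ≤
      2 * p ^ (a + k) := by
  have hmul : ∀ (j x y : ℕ), (p : ℤ) ^ (j + 1) ∣ p * x - p * y ↔ y ≡ x [MOD p ^ j] := by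
    intro j x y
    rw [Nat.modEq_iff_dvd, ← mul_sub, pow_succ', mul_dvd_mul_iff_left (mod_cast hp.ne_zero)]
    push_cast
    rfl
  rw [pow_add p a k]
  refine card_le_of_forall_tuple (N := p ^ l) (pow_pos hp.pos a) ?_ fun s hs hsa => ?_
  · rw [← pow_add]
    exact Finset.filter_subset _ _
  · obtain ⟨i, j, hij, hdvd⟩ := exists_pow_dvd_sub_of_hasShortPoint hp hA hD (Nat.lt_succ_of_le hal)
      (t := fun i => p * s i) (fun i j => (hmul a _ _).2 (hsa j i))
      fun i => (Finset.mem_filter.1 (hs i)).2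
    exact ⟨j, i, hij.symm, (hmul l _ _).1 hdvd⟩

theorem exists_param_not_hasShortPoint (hp : p.Prime) (hA : ¬ (p : ℤ) ∣ A.det)
    (hD : ¬ (p : ℤ) ∣ D) {m r : ℕ} (hrm : r < m) (hcount : r * (2 * p ^ r) < p ^ (m - 1)) :
    ∃ t : ℤ, (p : ℤ) ∣ t ∧ ∀ k < r, ¬ HasShortPoint p A D (m - k) (r - k) t := by
  classical
  let bad : ℕ → Finset ℕ := fun k =>
    (Finset.range (p ^ (m - 1))).filter fun s => HasShortPoint p A D (m - k) (r - k) (p * s)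
  have hbad : ∀ k ∈ Finset.range r, (bad k).card ≤ 2 * p ^ r := fun k hk => by
    rw [Finset.mem_range] at hk
    have hle := card_filter_hasShortPoint_le hp hA hD (l := m - 1 - k) (a := r - k) (by omega) k
    rwa [show m - 1 - k + k = m - 1 by omega, show m - 1 - k + 1 = m - k by omega,
      show r - k + k = r by omega] at hle
  have hunion : ((Finset.range r).biUnion bad).card < (Finset.range (p ^ (m - 1))).card := by
    refine (Finset.card_biUnion_le_card_mul _ _ _ hbad).trans_lt ?_
    simpa only [Finset.card_range] using hcount
  obtain ⟨s, hs, hsbad⟩ := Finset.exists_mem_notMem_of_card_lt_card hunion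
  exact ⟨p * s, dvd_mul_right _ _, fun k hk hshort => hsbad
    (Finset.mem_biUnion.2 ⟨k, Finset.mem_range.2 hk, Finset.mem_filter.2 ⟨hs, hshort⟩⟩)⟩

theorem exists_hasShortPoint_of_mem_congruenceLattice (hp : p.Prime) (hA : ¬ (p : ℤ) ∣ A.det)
    {m r : ℕ} (hrm : r ≤ m) {t : ℤ} {v : Fin 3 → ℤ}
    (hv : v ∈ congruenceLattice (conicShear D t * A) ![1, (p : ℤ) ^ m, (p : ℤ) ^ (2 * m)])
    (hvr : ∀ i, |v i| < (p : ℤ) ^ r) (hv0 : v ≠ 0) :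
    ∃ k < r, HasShortPoint p A D (m - k) (r - k) t := by
  have hpz : Prime (p : ℤ) := Nat.prime_iff_prime_int.1 hp
  have hp1 : (1 : ℤ) ≤ p := mod_cast hp.one_le
  obtain ⟨k, w, rfl, hw⟩ := exists_eq_pow_smul_primitive hpz.not_isUnit hv0
  have hpk : (0 : ℤ) < (p : ℤ) ^ k := pow_pos (by linarith) k
  have hwr : ∀ i, (p : ℤ) ^ k * |w i| < p ^ r := fun i => by
    simpa [abs_mul] using hvr i
  have hkr : k < r := by
    obtain ⟨i, hi⟩ := Function.ne_iff.1 (right_ne_zero_of_smul hv0)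
    refine (pow_lt_pow_iff_right₀ (a := (p : ℤ)) (mod_cast hp.one_lt)).1 ?_
    exact (le_mul_of_one_le_right hpk.le (Int.one_le_abs hi)).trans_lt (hwr i)
  set z := (conicShear D t * A) *ᵥ w with hz
  have hzA : z = conicShear D t *ᵥ (A *ᵥ w) := (Matrix.mulVec_mulVec _ _ _).symm
  have hdvd : ∀ {j i}, k ≤ j → (p : ℤ) ^ j ∣ (p : ℤ) ^ k * z i → (p : ℤ) ^ (j - k) ∣ z i := by
    intro j i hkj h
    rwa [← Nat.add_sub_cancel' hkj, pow_add, mul_dvd_mul_iff_left hpk.ne'] at h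
  rw [mem_congruenceLattice, Matrix.mulVec_smul, Fin.forall_fin_succ, Fin.forall_fin_two] at hv
  have hz1 : (p : ℤ) ^ (m - k) ∣ z 1 := hdvd (by omega) hv.2.1
  have hz2 : (p : ℤ) ^ (2 * m - k) ∣ z 2 := hdvd (by omega) hv.2.2
  have hz0 : ¬ (p : ℤ) ∣ z 0 := fun h0 => by
    refine hw (forall_dvd_of_forall_dvd_mulVec hpz (A := conicShear D t * A) ?_ fun
      | 0 => h0
      | 1 => (dvd_pow_self _ (by omega)).trans hz1
      | 2 => (dvd_pow_self _ (by omega)).trans hz2)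
    rwa [Matrix.det_mul, det_conicShear, one_mul]
  refine ⟨k, hkr, w, fun i => ?_, ?_, ?_, ?_⟩
  · refine lt_of_mul_lt_mul_left ((hwr i).trans_eq ?_) hpk.le
    rw [← pow_add, Nat.add_sub_cancel' hkr.le]
  · rwa [hzA, conicShear_mulVec] at hz0
  · rwa [hzA, conicShear_mulVec] at hz1
  · rw [← conicForm_conicShear_mulVec D t, ← hzA]
    exact pow_two_mul_dvd_conicForm hz1 ((pow_dvd_pow _ (by omega)).trans hz2)

end Obstructions

section NormalForm

open scoped Matrix

variable {p : ℕ} {A : Matrix (Fin 3) (Fin 3) ℤ} {D : ℤ}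

theorem pow_dvd_conicForm_of_mem_congruenceLattice {q t : ℤ} (hqt : q ∣ t) {m : ℕ} (hm : m ≠ 0)
    {x : Fin 3 → ℤ} (hxL : x ∈ congruenceLattice (conicShear D t * A) ![1, q ^ m, q ^ (2 * m)])
    (hxΛ : x ∉ congruenceLattice (conicShear D t * A) ![q, q ^ m, q ^ (2 * m)]) :
    ¬ q ∣ (A *ᵥ x) 0 ∧ q ∣ (A *ᵥ x) 1 ∧ q ∣ (A *ᵥ x) 2 ∧ q ^ (2 * m) ∣ conicForm D (A *ᵥ x) := by
  rw [mem_congruenceLattice, ← Matrix.mulVec_mulVec, Fin.forall_fin_succ, Fin.forall_fin_two]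
    at hxL hxΛ
  obtain ⟨-, h1, h2⟩ := hxL
  have h0 : ¬ q ∣ (conicShear D t *ᵥ (A *ᵥ x)) 0 := fun h => hxΛ ⟨h, h1, h2⟩
  have hQ := pow_two_mul_dvd_conicForm (D := D) (y := conicShear D t *ᵥ (A *ᵥ x)) h1 h2
  rw [conicForm_conicShear_mulVec] at hQ
  rw [conicShear_mulVec] at h0 h1 h2
  have hparam := (dvd_pow_self q hm).trans h1
  have htangent := (dvd_pow_self q (mul_ne_zero two_ne_zero hm)).trans h2
  have hdvd1 : q ∣ (A *ᵥ x) 1 := (dvd_sub_left (hqt.mul_right _)).1 hparam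
  refine ⟨h0, hdvd1, ?_, hQ⟩
  refine (dvd_add_left (hdvd1.mul_left (2 * D * t))).1 ((dvd_sub_left ?_).1 htangent)
  exact ((hqt.pow two_ne_zero).mul_left D).mul_right _

theorem exists_short_conic_point (hp : p.Prime) (hA : ¬ (p : ℤ) ∣ A.det) (hD : ¬ (p : ℤ) ∣ D)
    {m r : ℕ} (hrm : r < m) (hcount : r * (2 * p ^ r) < p ^ (m - 1)) :
    ∃ x : Fin 3 → ℤ, ¬ (p : ℤ) ∣ (A *ᵥ x) 0 ∧ (p : ℤ) ∣ (A *ᵥ x) 1 ∧ (p : ℤ) ∣ (A *ᵥ x) 2 ∧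
      (p : ℤ) ^ (2 * m) ∣ conicForm D (A *ᵥ x) ∧
      ∀ i, |x i| * (p : ℤ) ^ (2 * r) < 2 * p ^ (3 * m + 1) := by
  obtain ⟨t, hpt, ht⟩ := exists_param_not_hasShortPoint hp hA hD hrm hcount
  set B := conicShear D t * A with hB
  have hBdet : ¬ (p : ℤ) ∣ B.det := by rwa [hB, Matrix.det_mul, det_conicShear, one_mul]
  set Λ := congruenceLattice B ![(p : ℤ), (p : ℤ) ^ m, (p : ℤ) ^ (2 * m)]
  have hlt : Λ < congruenceLattice B ![1, (p : ℤ) ^ m, (p : ℤ) ^ (2 * m)] :=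
    congruenceLattice_lt (by simp [Fin.forall_fin_succ]) (j := 0) (by simpa using hBdet)
  have hindex : Λ.index ∣ p ^ (3 * m + 1) := by
    refine (congruenceLattice_index_dvd _ _).trans (dvd_of_eq ?_)
    simp only [Fin.prod_univ_three, Matrix.cons_val, Int.natAbs_pow, Int.natAbs_natCast]
    ring
  have : Λ.FiniteIndex :=
    ⟨fun h => (pow_ne_zero _ hp.ne_zero) (zero_dvd_iff.1 (h ▸ hindex))⟩
  obtain ⟨x, hxL, hxΛ, hx⟩ := exists_mem_notMem_abs_mul_pow_lt hlt (pow_pos hp.pos r)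
    fun v hv hvr => by
      by_contra hv0
      obtain ⟨k, hk, hshort⟩ := exists_hasShortPoint_of_mem_congruenceLattice hp hA hrm.le
        (hlt.le hv) (by exact_mod_cast hvr) hv0
      exact ht k hk hshort
  obtain ⟨hx0, hx1, hx2, hQ⟩ :=
    pow_dvd_conicForm_of_mem_congruenceLattice hpt (Nat.ne_zero_of_lt hrm) hxL hxΛ
  refine ⟨x, hx0, hx1, hx2, hQ, fun i => ?_⟩
  have hpr : (0 : ℤ) < p ^ r := pow_pos (mod_cast hp.pos) r
  have hindex_le : (Λ.index : ℤ) ≤ p ^ (3 * m + 1) :=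
    mod_cast Nat.le_of_dvd (pow_pos hp.pos _) hindex
  refine lt_of_mul_lt_mul_right (a := (p : ℤ) ^ r) ?_ hpr.le
  calc |x i| * (p : ℤ) ^ (2 * r) * p ^ r
      = |x i| * ((p ^ r : ℕ) : ℤ) ^ Fintype.card (Fin 3) := by
        rw [Fintype.card_fin]; push_cast; ring
    _ < 2 * (p ^ r : ℕ) * Λ.index := hx i
    _ ≤ 2 * (p ^ r : ℕ) * p ^ (3 * m + 1) := by gcongr
    _ = 2 * p ^ (3 * m + 1) * p ^ r := by push_cast; ring

end NormalForm

section DiagonalForm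

open scoped Matrix

/-- For a zero `a` of `∑ i, α i * x i ^ 2`, coordinates in which this form is proportional to
`conicForm (α 0 * α 1)`: the rows `0` and `2` are the two factors of
`(α 0 * a 0 * x 0 + α 1 * a 1 * x 1) ^ 2 - (α 2 * a 2 * x 2) ^ 2`. -/
def diagonalConicMatrix (α a : Fin 3 → ℤ) : Matrix (Fin 3) (Fin 3) ℤ :=
  !![α 0 * a 0, α 1 * a 1, -(α 2 * a 2); a 1, -a 0, 0; α 0 * a 0, α 1 * a 1, α 2 * a 2]

theorem diagonalConicMatrix_mulVec (α a x : Fin 3 → ℤ) :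
    diagonalConicMatrix α a *ᵥ x =
      ![α 0 * a 0 * x 0 + α 1 * a 1 * x 1 - α 2 * a 2 * x 2, a 1 * x 0 - a 0 * x 1,
        α 0 * a 0 * x 0 + α 1 * a 1 * x 1 + α 2 * a 2 * x 2] := by
  rw [diagonalConicMatrix, Matrix.cons_mulVec, Matrix.cons_mulVec, Matrix.cons_mulVec,
    Matrix.empty_mulVec]
  refine Matrix.vec3_eq ?_ ?_ ?_ <;> simp only [Matrix.vec3_dotProduct, Matrix.cons_val] <;> ring

theorem conicForm_diagonalConicMatrix_mulVec (α a x : Fin 3 → ℤ) :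
    conicForm (α 0 * α 1) (diagonalConicMatrix α a *ᵥ x) =
      (∑ i, α i * a i ^ 2) * (α 0 * x 0 ^ 2 + α 1 * x 1 ^ 2) -
        α 2 * a 2 ^ 2 * ∑ i, α i * x i ^ 2 := by
  simp only [conicForm, diagonalConicMatrix_mulVec, Matrix.cons_val, Fin.sum_univ_three]
  ring

variable {p : ℤ} {α a : Fin 3 → ℤ}

theorem not_dvd_det_diagonalConicMatrix (hp : Prime p) (hp2 : ¬ p ∣ 2) (hα : ¬ p ∣ α 2)
    (ha : ¬ p ∣ a 2) (hQ : p ∣ ∑ i, α i * a i ^ 2) : ¬ p ∣ (diagonalConicMatrix α a).det := by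
  have hdet : (diagonalConicMatrix α a).det =
      2 * α 2 * a 2 * (α 2 * a 2 ^ 2) - 2 * α 2 * a 2 * ∑ i, α i * a i ^ 2 := by
    simp only [diagonalConicMatrix, Matrix.det_fin_three, Fin.sum_univ_three, Matrix.of_apply,
      Matrix.cons_val]
    ring
  rw [hdet, dvd_sub_left (hQ.mul_left _)]
  simp [hp.dvd_mul, hp.dvd_pow_iff_dvd two_ne_zero, hp2, hα, ha]

theorem not_dvd_of_dvd_diagonalConicMatrix_mulVec (hp : Prime p) (hp2 : ¬ p ∣ 2) (hα : ¬ p ∣ α 2)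
    (ha : ∀ i, ¬ p ∣ a i) (hQ : p ∣ ∑ i, α i * a i ^ 2) {x : Fin 3 → ℤ}
    (hx0 : ¬ p ∣ (diagonalConicMatrix α a *ᵥ x) 0) (hx1 : p ∣ (diagonalConicMatrix α a *ᵥ x) 1)
    (hx2 : p ∣ (diagonalConicMatrix α a *ᵥ x) 2) (i : Fin 3) : ¬ p ∣ x i := by
  have ha1 : (diagonalConicMatrix α a *ᵥ a) 1 = 0 := by
    simp only [diagonalConicMatrix_mulVec, Matrix.cons_val]
    ring
  have ha2 : (diagonalConicMatrix α a *ᵥ a) 2 = ∑ i, α i * a i ^ 2 := by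
    simp only [diagonalConicMatrix_mulVec, Matrix.cons_val, Fin.sum_univ_three]
    ring
  refine not_dvd_apply_of_dvd_mulVec hp (not_dvd_det_diagonalConicMatrix hp hp2 hα (ha 2) hQ)
    (y := a) (j := 0) ?_ ?_ hx0 (ha i)
  · simp [Fin.forall_fin_succ, hx1, hx2]
  · simp [Fin.forall_fin_succ, ha1, ha2, hQ]

end DiagonalForm

section Bounds

variable {p : ℕ} {α a : Fin 3 → ℤ}

theorem exists_unit_zero_abs_mul_pow_lt (hp : p.Prime) (hp2 : 2 < p) {n m r : ℕ} (hn : n ≠ 0)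
    (hnm : n ≤ 2 * m) (hrm : r < m) (hcount : r * (2 * p ^ r) < p ^ (m - 1))
    (hα : ∀ i, ¬ (p : ℤ) ∣ α i) (ha : ∀ i, ¬ (p : ℤ) ∣ a i)
    (hQ : (p : ℤ) ^ n ∣ ∑ i, α i * a i ^ 2) :
    ∃ x : Fin 3 → ℤ, (∀ i, ¬ (p : ℤ) ∣ x i) ∧ (p : ℤ) ^ n ∣ ∑ i, α i * x i ^ 2 ∧
      ∀ i, |x i| * (p : ℤ) ^ (2 * r) < 2 * p ^ (3 * m + 1) := by
  have hpz : Prime (p : ℤ) := Nat.prime_iff_prime_int.1 hp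
  have hpQ := (dvd_pow_self (p : ℤ) hn).trans hQ
  have hp_two : ¬ (p : ℤ) ∣ 2 := fun h => by
    have := Int.le_of_dvd two_pos h
    omega
  have hD : ¬ (p : ℤ) ∣ α 0 * α 1 := fun h => (hpz.dvd_or_dvd h).elim (hα 0) (hα 1)
  have hA := not_dvd_det_diagonalConicMatrix hpz hp_two (hα 2) (ha 2) hpQ
  obtain ⟨x, hx0, hx1, hx2, hconic, hbound⟩ := exists_short_conic_point hp hA hD hrm hcount
  refine ⟨x, not_dvd_of_dvd_diagonalConicMatrix_mulVec hpz hp_two (hα 2) ha hpQ hx0 hx1 hx2, ?_,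
    hbound⟩
  replace hconic := (pow_dvd_pow _ hnm).trans hconic
  rw [conicForm_diagonalConicMatrix_mulVec, dvd_sub_right (hQ.mul_right _)] at hconic
  refine hpz.pow_dvd_of_dvd_mul_left _ (fun h => ?_) hconic
  exact (hpz.dvd_or_dvd h).elim (hα 2) fun h => ha 2 (hpz.dvd_of_dvd_pow h)

theorem sub_log_mul_pow_lt {p : ℕ} (hp : 1 < p) (m : ℕ) :
    (m - (Nat.log p (2 * m) + 2)) * (2 * p ^ (m - (Nat.log p (2 * m) + 2))) < p ^ (m - 1) := by
  have hlog : 2 * m < p ^ (Nat.log p (2 * m) + 1) := Nat.lt_pow_succ_log_self hp (2 * m)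
  rcases le_or_gt m (Nat.log p (2 * m) + 2) with hle | hlt
  · simpa [Nat.sub_eq_zero_of_le hle] using pow_pos (by omega) _
  · set e := Nat.log p (2 * m)
    calc (m - (e + 2)) * (2 * p ^ (m - (e + 2)))
        = 2 * (m - (e + 2)) * p ^ (m - (e + 2)) := by ring
      _ < p ^ (e + 1) * p ^ (m - (e + 2)) := by
          gcongr
          omega
      _ = p ^ (m - 1) := by rw [← pow_add]; congr 1; omega

theorem exists_unit_zero_abs_lt (hp : p.Prime) (hp2 : 2 < p) {n : ℕ} (hn : n ≠ 0)
    (hα : ∀ i, ¬ (p : ℤ) ∣ α i) (ha : ∀ i, ¬ (p : ℤ) ∣ a i)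
    (hQ : (p : ℤ) ^ n ∣ ∑ i, α i * a i ^ 2) :
    ∃ x : Fin 3 → ℤ, (∀ i, ¬ (p : ℤ) ∣ x i) ∧ (p : ℤ) ^ n ∣ ∑ i, α i * x i ^ 2 ∧
      ∀ i, |x i| < 8 * p ^ 5 * n ^ 2 * p ^ ((n + 1) / 2) := by
  set m := (n + 1) / 2
  have hm : m ≠ 0 := by omega
  have hcount := sub_log_mul_pow_lt hp.one_lt m
  have hlog : p ^ Nat.log p (2 * m) ≤ 2 * n :=
    (Nat.pow_log_le_self p (by omega)).trans (by omega)
  set e := Nat.log p (2 * m)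
  obtain ⟨x, hxp, hxQ, hx⟩ := exists_unit_zero_abs_mul_pow_lt hp hp2 (r := m - (e + 2)) hn
    (by omega) (by omega) hcount hα ha hQ
  refine ⟨x, hxp, hxQ, fun i => lt_of_mul_lt_mul_right ((hx i).trans_le ?_) (by positivity)⟩
  have hexp : 3 * m + 1 ≤ 2 * e + (m + 5) + 2 * (m - (e + 2)) := by omega
  have hp1 : (1 : ℤ) ≤ p := mod_cast hp.one_le
  have hlogz : (p : ℤ) ^ e ≤ 2 * n := mod_cast hlog
  calc (2 : ℤ) * p ^ (3 * m + 1) ≤ 2 * p ^ (2 * e + (m + 5) + 2 * (m - (e + 2))) := by gcongr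
    _ = 2 * (p ^ e) ^ 2 * p ^ (m + 5) * p ^ (2 * (m - (e + 2))) := by ring
    _ ≤ 2 * (2 * n) ^ 2 * p ^ (m + 5) * p ^ (2 * (m - (e + 2))) := by gcongr
    _ = 8 * p ^ 5 * n ^ 2 * p ^ m * p ^ (2 * (m - (e + 2))) := by ring

theorem exists_sq_mul_pow_half_le_rpow {b θ : ℝ} (hb : 1 < b) (hθ : 1 / 2 < θ) :
    ∃ C > 0, ∀ n : ℕ, (n : ℝ) ^ 2 * b ^ ((n + 1) / 2) ≤ C * (b ^ n) ^ θ := by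
  have hb0 : 0 < b := by linarith
  obtain ⟨C, hC, hbound⟩ := Asymptotics.bound_of_isBigO_nat_atTop
    (isLittleO_pow_const_const_pow_of_one_lt (R := ℝ) 2
      (Real.one_lt_rpow hb (sub_pos.2 hθ))).isBigO
  refine ⟨C * b, mul_pos hC hb0, fun n => ?_⟩
  have hsq : (n : ℝ) ^ 2 ≤ C * b ^ ((θ - 1 / 2) * n) := by
    have hle := hbound (x := n) (pow_pos (Real.rpow_pos_of_pos hb0 _) n).ne'
    rwa [← Real.rpow_mul_natCast hb0.le, Real.norm_of_nonneg (by positivity),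
      Real.norm_of_nonneg (by positivity)] at hle
  have hhalf : b ^ ((n + 1) / 2) ≤ b * b ^ ((n : ℝ) / 2) := by
    rw [← Real.rpow_one_add' hb0.le (by positivity), ← Real.rpow_natCast]
    refine Real.rpow_le_rpow_of_exponent_le hb.le ?_
    have := Nat.cast_div_le (α := ℝ) (m := n + 1) (n := 2)
    push_cast at this
    linarith
  calc (n : ℝ) ^ 2 * b ^ ((n + 1) / 2)
      ≤ C * b ^ ((θ - 1 / 2) * n) * (b * b ^ ((n : ℝ) / 2)) := by gcongr
    _ = C * b * (b ^ ((θ - 1 / 2) * n) * b ^ ((n : ℝ) / 2)) := by ring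
    _ = C * b * (b ^ n) ^ θ := by
        rw [← Real.rpow_add hb0, ← Real.rpow_natCast_mul hb0.le]
        ring_nf

end Bounds

theorem small_unit_solution_uniform_coefficients_general {p : ℕ} (hp : p.Prime) (hp2 : 2 < p)
    {θ : ℝ} (hθ : 1 / 2 < θ) :
    ∃ C : ℝ, 0 < C ∧ ∀ n : ℕ, n ≠ 0 →
      ∀ α₁ α₂ α₃ : ℤ, ¬ (p : ℤ) ∣ α₁ → ¬ (p : ℤ) ∣ α₂ → ¬ (p : ℤ) ∣ α₃ →
      ((∃ x₁ x₂ x₃ : ℤ, ¬ (p : ℤ) ∣ x₁ * x₂ * x₃ ∧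
          (p : ℤ) ^ n ∣ α₁ * x₁ ^ 2 + α₂ * x₂ ^ 2 + α₃ * x₃ ^ 2) →
        ∃ x₁ x₂ x₃ : ℤ, ¬ (p : ℤ) ∣ x₁ * x₂ * x₃ ∧
          (p : ℤ) ^ n ∣ α₁ * x₁ ^ 2 + α₂ * x₂ ^ 2 + α₃ * x₃ ^ 2 ∧
          ((max (max |x₁| |x₂|) |x₃| : ℤ) : ℝ) ≤ C * ((p : ℝ) ^ n) ^ θ) := by
  have hpz : Prime (p : ℤ) := Nat.prime_iff_prime_int.1 hp
  have : (0 : ℝ) < p := mod_cast hp.pos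
  obtain ⟨C, hC, hbound⟩ := exists_sq_mul_pow_half_le_rpow (b := p) (mod_cast hp.one_lt) hθ
  refine ⟨8 * p ^ 5 * C, by positivity, fun n hn α₁ α₂ α₃ h₁ h₂ h₃ ⟨a₁, a₂, a₃, ha, hQ⟩ => ?_⟩
  simp only [hpz.dvd_mul, not_or] at ha
  obtain ⟨x, hxp, hxQ, hx⟩ := exists_unit_zero_abs_lt hp hp2 hn
    (α := ![α₁, α₂, α₃]) (a := ![a₁, a₂, a₃]) (by simp [Fin.forall_fin_succ, *])
    (by simp [Fin.forall_fin_succ, ha]) (by simpa [Fin.sum_univ_three] using hQ)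
  refine ⟨x 0, x 1, x 2, by simp [hpz.dvd_mul, hxp],
    by simpa [Fin.sum_univ_three] using hxQ, ?_⟩
  have hmax : max (max |x 0| |x 1|) |x 2| ≤ 8 * p ^ 5 * (n ^ 2 * p ^ ((n + 1) / 2)) := by
    simp only [max_le_iff, ← mul_assoc]
    exact ⟨⟨(hx 0).le, (hx 1).le⟩, (hx 2).le⟩
  calc ((max (max |x 0| |x 1|) |x 2| : ℤ) : ℝ)
      ≤ 8 * p ^ 5 * (n ^ 2 * p ^ ((n + 1) / 2)) := mod_cast hmax
    _ ≤ 8 * p ^ 5 * (C * (p ^ n) ^ θ) :=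
        mul_le_mul_of_nonneg_left (hbound n) (by positivity)
    _ = 8 * p ^ 5 * C * (p ^ n) ^ θ := by ring

/-- For fixed `p`, for all large `n`, uniformly in the coefficients
`α₁, α₂, α₃` coprime to `p`: whenever the congruence
`α₁x₁² + α₂x₂² + α₃x₃² ≡ 0 (mod pⁿ)` has a solution with all coordinates coprime to `p`,
it has such a solution of size `≤ C · (pⁿ)^{11/18+ε}`. -/
theorem small_unit_solution_uniform_coefficients
    (ε : ℝ) (hε : 0 < ε) (p : ℕ) (hp : p.Prime) (hp2 : 2 < p) :
    ∃ C : ℝ, 0 < C ∧ ∃ n₀ : ℕ, ∀ n : ℕ, n₀ ≤ n →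
      ∀ α₁ α₂ α₃ : ℤ, ¬ (p : ℤ) ∣ α₁ → ¬ (p : ℤ) ∣ α₂ → ¬ (p : ℤ) ∣ α₃ →
      ((∃ x₁ x₂ x₃ : ℤ, ¬ (p : ℤ) ∣ x₁ * x₂ * x₃ ∧
          (p : ℤ) ^ n ∣ α₁ * x₁ ^ 2 + α₂ * x₂ ^ 2 + α₃ * x₃ ^ 2) →
        ∃ x₁ x₂ x₃ : ℤ, ¬ (p : ℤ) ∣ x₁ * x₂ * x₃ ∧
          (p : ℤ) ^ n ∣ α₁ * x₁ ^ 2 + α₂ * x₂ ^ 2 + α₃ * x₃ ^ 2 ∧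
          ((max (max |x₁| |x₂|) |x₃| : ℤ) : ℝ) ≤ C * ((p : ℝ) ^ n) ^ ((11 : ℝ) / 18 + ε)) := by
  obtain ⟨C, hC, hsolution⟩ :=
    small_unit_solution_uniform_coefficients_general hp hp2 (θ := 11 / 18 + ε) (by linarith)
  exact ⟨C, hC, 1, fun n hn => hsolution n (Nat.one_le_iff_ne_zero.1 hn)⟩
end

section
/- For every ε > 0 there exists a constant C(ε) > 0 such that for all nonzero integers A, B, C and every real number x ≥ 1, the number of pairs (X,Y) ∈ ℤ² with max(|X|,|Y|) ≤ x and AX² + BY² = C is at most C(ε) · (|A·B·C|·x)^ε. -/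
/-!
Put `N = AC` and `-AB = D m²` with `D` squarefree: then `z = AX + mY√D` has norm `N` in `ℤ[√D]`, so
it suffices to count elements of norm `N` in a box. Dividing by `g = gcd(Re z, Im z)`, where
`g² ∣ N`, one may assume that `z` is primitive, of norm `n`. Relative to a fixed primitive `a` of
norm `n`, the divisor `d = gcd(n, Im(z ā))` records that `z` is proportional to `a` modulo `d` and
to `ā` modulo `n / d`. Hence any two `z`, `w` with the same `d` are proportional modulo
`lcm(d, n / d)`; as `D` is squarefree, `gcd(d, n / d) ∣ 2`, so `2 z w̄ / n` lies in `ℤ[√D]`, and it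
has norm `4`. Elements of norm `4` grow geometrically, so a box contains only logarithmically many
of them, and the number of pairs `(g, d)` is controlled by the divisor bound.
-/

open Finset Real

section DivisorBound

theorem natCast_add_one_le_mul_pow {a b : ℝ} (ha : 1 < a) (hab : a ≤ b) (k : ℕ) :
    (k + 1 : ℝ) ≤ a / (a - 1) * b ^ k := by
  have ha' : 0 < a - 1 := sub_pos.mpr ha
  have bernoulli : 1 + k * (a - 1) ≤ b ^ k :=
    (one_add_mul_sub_le_pow (by linarith) k).trans (by gcongr)
  rw [div_mul_eq_mul_div, le_div_iff₀ ha']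
  nlinarith [mul_nonneg k.cast_nonneg (sq_nonneg (a - 1))]

theorem prod_ite_lt_mul_le {c : ℝ} (hc : 1 ≤ c) (s : Finset ℕ) (P : ℕ) :
    ∏ p ∈ s, (if p < P then c else 1) ≤ c ^ P := by
  rw [← prod_filter, prod_const]
  refine pow_le_pow_right₀ hc ((card_le_card fun p hp ↦ ?_).trans_eq (card_range P))
  exact mem_range.mpr (mem_filter.mp hp).2

/-- For large primes `p` already `k + 1 ≤ 2 ^ k ≤ (p ^ k) ^ ε`, so only boundedly many primes
contribute a constant factor. -/
theorem exists_card_divisors_le_rpow {ε : ℝ} (hε : 0 < ε) :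
    ∃ c : ℝ, 0 < c ∧ ∀ n : ℕ, n ≠ 0 → (#n.divisors : ℝ) ≤ c * (n : ℝ) ^ ε := by
  obtain ⟨P, hP⟩ := exists_nat_ge ((2 : ℝ) ^ ε⁻¹)
  have h2ε : 1 < (2 : ℝ) ^ ε := one_lt_rpow one_lt_two hε
  set c : ℝ := 2 ^ ε / (2 ^ ε - 1)
  have hc : 1 ≤ c := (one_le_div (sub_pos.mpr h2ε)).mpr (by linarith)
  refine ⟨c ^ P, by positivity, fun n hn ↦ ?_⟩
  have factor_le (p k : ℕ) (hp : p.Prime) :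
      (k + 1 : ℝ) ≤ (if p < P then c else 1) * ((p : ℝ) ^ ε) ^ k := by
    split_ifs with h
    · have hp2 : (2 : ℝ) ≤ p := mod_cast hp.two_le
      exact natCast_add_one_le_mul_pow h2ε (by gcongr) k
    · have two_le : 2 ≤ (p : ℝ) ^ ε := by
        rw [← rpow_inv_le_iff_of_pos zero_le_two p.cast_nonneg hε]
        exact hP.trans (mod_cast not_lt.mp h)
      have add_one_le : (k + 1 : ℝ) ≤ 2 ^ k := mod_cast k.lt_two_pow_self
      rw [one_mul]
      exact add_one_le.trans (pow_le_pow_left₀ zero_le_two two_le k)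
  have prod_rpow : ∏ p ∈ n.primeFactors, ((p : ℝ) ^ ε) ^ n.factorization p = (n : ℝ) ^ ε := by
    simp_rw [rpow_pow_comm (Nat.cast_nonneg _)]
    rw [finsetProd_rpow _ _ fun p _ ↦ by positivity]
    exact_mod_cast congrArg (fun m : ℕ ↦ (m : ℝ) ^ ε) (Nat.prod_factorization_pow_eq_self hn)
  calc (#n.divisors : ℝ) = ∏ p ∈ n.primeFactors, (n.factorization p + 1 : ℝ) := by
        rw [Nat.card_divisors hn]
        push_cast
        rfl
    _ ≤ ∏ p ∈ n.primeFactors, (if p < P then c else 1) * ((p : ℝ) ^ ε) ^ n.factorization p :=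
        prod_le_prod (fun p _ ↦ by positivity)
          fun p hp ↦ factor_le p _ (Nat.prime_of_mem_primeFactors hp)
    _ ≤ c ^ P * (n : ℝ) ^ ε := by
        rw [prod_mul_distrib, prod_rpow]
        gcongr
        exact prod_ite_lt_mul_le hc _ P

end DivisorBound

section GeometricGrowth

theorem card_le_floor_logb_add_one {r K : ℝ} (hr : 1 < r) {T : Finset ℝ}
    (hT : ∀ a ∈ T, 1 ≤ a ∧ a ≤ K) (gap : ∀ a ∈ T, ∀ b ∈ T, a < b → r * a ≤ b) :
    #T ≤ ⌊logb r K⌋₊ + 1 := by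
  rw [← card_range (⌊logb r K⌋₊ + 1)]
  have floor_strictMono : StrictMonoOn (fun a ↦ ⌊logb r a⌋₊) T := fun a ha b hb hab ↦ by
    have ha1 : 1 ≤ a := (hT a ha).1
    rw [← Nat.succ_le_iff, Nat.succ_eq_add_one, ← Nat.floor_add_one (logb_nonneg hr ha1)]
    refine Nat.floor_le_floor ?_
    calc logb r a + 1 = logb r (r * a) := by
          rw [logb_mul (by positivity) (by positivity), logb_self_eq_one hr, add_comm]
      _ ≤ logb r b := logb_le_logb_of_le hr (by positivity) (gap a ha b hb hab)
  refine card_le_card_of_injOn _ (fun a ha ↦ ?_) floor_strictMono.injOn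
  have ⟨ha1, haK⟩ := hT a ha
  exact mem_coe.mpr (mem_range_succ_iff.mpr
    (Nat.floor_le_floor (logb_le_logb_of_le hr (by positivity) haK)))

theorem exists_floor_logb_add_le_rpow {r ε m : ℝ} (hr : 1 < r) (hε : 0 < ε) (hm : 0 ≤ m) :
    ∃ c : ℝ, 0 < c ∧ ∀ y : ℝ, 1 ≤ y → (⌊logb r y⌋₊ + m : ℝ) ≤ c * y ^ ε := by
  have hlog : 0 < log r := log_pos hr
  refine ⟨1 / (ε * log r) + m, by positivity, fun y hy ↦ ?_⟩
  have hy0 : 0 ≤ y := by linarith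
  calc (⌊logb r y⌋₊ + m : ℝ) ≤ log y / log r + m * 1 := by
        rw [mul_one]
        gcongr
        exact Nat.floor_le (logb_nonneg hr hy)
    _ ≤ y ^ ε / ε / log r + m * y ^ ε := by
        gcongr
        · exact log_le_rpow_div hy0 hε
        · exact one_le_rpow hy hε.le
    _ = (1 / (ε * log r) + m) * y ^ ε := by field_simp

end GeometricGrowth

section BoundedNorm

theorem add_one_mul_le_of_sq_sub_mul_sq_eq {D k p q p' q' : ℤ} (hk : 0 < k) (hp : 0 ≤ p)
    (hq : 0 ≤ q) (hq' : 0 ≤ q') (hpq : p ^ 2 - D * q ^ 2 = k) (hpq' : p' ^ 2 - D * q' ^ 2 = k)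
    (hlt : p < p') : (k + 1) * p ≤ k * p' := by
  rcases le_or_gt D 0 with hD | hD
  · have p'_le : p' ≤ k := by nlinarith [mul_nonneg (neg_nonneg.mpr hD) (sq_nonneg q')]
    nlinarith
  have hqq' : 0 < q' ^ 2 - q ^ 2 := pos_of_mul_pos_right (a := D) (by nlinarith) hD.le
  -- `P + Q√D` is `(p' + q'√D)(p - q√D)`
  obtain ⟨P, hP⟩ : ∃ P, P = p * p' - D * q * q' := ⟨_, rfl⟩
  obtain ⟨Q, hQ⟩ : ∃ Q, Q = q' * p - p' * q := ⟨_, rfl⟩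
  have norm_PQ : P ^ 2 - D * Q ^ 2 = k ^ 2 := by
    rw [hP, hQ]
    linear_combination (p' ^ 2 - D * q' ^ 2) * hpq + k * hpq'
  have Q_pos : 0 < Q := by
    have : Q * (q' * p + p' * q) = k * (q' ^ 2 - q ^ 2) := by
      rw [hQ]
      linear_combination q' ^ 2 * hpq - q ^ 2 * hpq'
    have hp' : 0 ≤ p' := hp.trans hlt.le
    refine pos_of_mul_pos_left (b := q' * p + p' * q) ?_ (by positivity)
    rw [this]
    positivity
  have P_pos : 0 < P := by
    have : (D * q * q') ^ 2 < (p * p') ^ 2 := by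
      have : (p * p') ^ 2 = (D * q ^ 2 + k) * (D * q' ^ 2 + k) := by
        linear_combination p' ^ 2 * hpq + (D * q ^ 2 + k) * hpq'
      nlinarith [mul_nonneg hD.le (sq_nonneg q), mul_nonneg hD.le (sq_nonneg q')]
    linarith [lt_of_pow_lt_pow_left₀ 2 (by nlinarith) this]
  have P_gt : k < P :=
    lt_of_pow_lt_pow_left₀ 2 P_pos.le (by nlinarith [mul_pos hD (pow_pos Q_pos 2)])
  calc (k + 1) * p ≤ P * p + D * Q * q := by nlinarith [mul_nonneg (mul_pos hD Q_pos).le hq]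
    _ = k * p' := by
        rw [hP, hQ]
        linear_combination p' * hpq

variable {D : ℤ}

theorem add_one_mul_abs_re_le_of_norm_eq {k : ℤ} (hk : 0 < k) {z w : ℤ√D} (hz : z.norm = k)
    (hw : w.norm = k) (hlt : |z.re| < |w.re|) : (k + 1) * |z.re| ≤ k * |w.re| := by
  refine add_one_mul_le_of_sq_sub_mul_sq_eq (D := D) hk (abs_nonneg _) (abs_nonneg z.im)
    (abs_nonneg w.im) ?_ ?_ hlt
  · rw [sq_abs, sq_abs, ← hz, Zsqrtd.norm_def]
    ring
  · rw [sq_abs, sq_abs, ← hw, Zsqrtd.norm_def]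
    ring

theorem mem_neg_star_of_norm_eq (hD : D ≠ 0) {z w : ℤ√D} (hnorm : z.norm = w.norm)
    (hre : |z.re| = |w.re|) : z ∈ ({w, -w, star w, -star w} : Finset (ℤ√D)) := by
  have him : |z.im| = |w.im| := by
    rw [← sq_eq_sq_iff_abs_eq_abs] at hre ⊢
    rw [Zsqrtd.norm_def, Zsqrtd.norm_def] at hnorm
    exact mul_left_cancel₀ hD (by linear_combination hre - hnorm)
  rcases abs_eq_abs.mp hre with hre | hre <;> rcases abs_eq_abs.mp him with him | him <;>
    simp [Zsqrtd.ext_iff, hre, him]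

theorem card_norm_eq_le_of_pos (hD : D ≠ 0) {k : ℤ} (hk : 0 < k) {K : ℝ} {T : Finset (ℤ√D)}
    (hT : ∀ z ∈ T, z.norm = k ∧ |(z.re : ℝ)| ≤ K) :
    #T ≤ 4 * (⌊logb ((k + 1) / k) K⌋₊ + 2) := by
  have k_pos : (0 : ℝ) < k := mod_cast hk
  let absRe (z : ℤ√D) : ℝ := |(z.re : ℝ)|
  have card_fiber_le : ∀ a ∈ T.image absRe, #{z ∈ T | absRe z = a} ≤ 4 := by
    rintro _ ha
    obtain ⟨w, hw, rfl⟩ := mem_image.mp ha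
    refine (card_le_card fun z hz ↦ ?_).trans
      (card_le_four (a := w) (b := -w) (c := star w) (d := -star w))
    obtain ⟨hzT, hzw⟩ := mem_filter.mp hz
    change |(z.re : ℝ)| = |(w.re : ℝ)| at hzw
    exact mem_neg_star_of_norm_eq hD ((hT z hzT).1.trans (hT w hw).1.symm) (mod_cast hzw)
  have card_image_le : #((T.image absRe).erase 0) ≤ ⌊logb ((k + 1) / k) K⌋₊ + 1 := by
    refine card_le_floor_logb_add_one ((one_lt_div k_pos).mpr (by linarith)) ?_ ?_
    · intro a ha
      obtain ⟨ha0, ha⟩ := mem_erase.mp ha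
      obtain ⟨z, hz, rfl⟩ := mem_image.mp ha
      have one_le : 1 ≤ |z.re| := Int.one_le_abs fun h ↦ ha0 (by simp [absRe, h])
      exact ⟨show (1 : ℝ) ≤ |(z.re : ℝ)| from mod_cast one_le, (hT z hz).2⟩
    · intro a ha b hb hab
      obtain ⟨z, hz, rfl⟩ := mem_image.mp (mem_of_mem_erase ha)
      obtain ⟨w, hw, rfl⟩ := mem_image.mp (mem_of_mem_erase hb)
      change |(z.re : ℝ)| < |(w.re : ℝ)| at hab
      rw [div_mul_eq_mul_div, div_le_iff₀' k_pos]
      change (k + 1) * |(z.re : ℝ)| ≤ k * |(w.re : ℝ)|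
      exact_mod_cast add_one_mul_abs_re_le_of_norm_eq hk (hT z hz).1 (hT w hw).1 (mod_cast hab)
  calc #T ≤ 4 * #(T.image absRe) := card_le_mul_card_image T 4 card_fiber_le
    _ ≤ 4 * (⌊logb ((k + 1) / k) K⌋₊ + 2) := by
        have := pred_card_le_card_erase (s := T.image absRe) (a := 0)
        omega

end BoundedNorm

theorem dvd_of_squarefree_of_sq_dvd_sq_mul {α : Type*} [CommMonoidWithZero α] [GCDMonoid α]
    {x y z : α} (hz : Squarefree z) (h : x ^ 2 ∣ y ^ 2 * z) : x ∣ y := by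
  obtain ⟨x', y', hx, hy, hcop⟩ := extract_gcd x y
  have gcd_dvd : gcd x y ∣ y := gcd_dvd_right x y
  generalize gcd x y = g at hx hy gcd_dvd
  subst hx
  rcases eq_or_ne g 0 with rfl | hg
  · rw [zero_dvd_iff.mp gcd_dvd]
    exact dvd_zero _
  rw [hy, mul_pow, mul_pow, mul_assoc, mul_dvd_mul_iff_left (pow_ne_zero 2 hg)] at h
  have hx'z : x' ^ 2 ∣ z := (gcd_isUnit_iff_isRelPrime.mp hcop).pow.dvd_of_dvd_mul_left h
  have hx' : IsUnit x' := hz x' (sq x' ▸ hx'z)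
  rwa [hx'.mul_right_dvd]

section Primitive

variable {D n : ℤ} {z w a : ℤ√D}

theorem isCoprime_norm_im (hz : IsCoprime z.re z.im) : IsCoprime z.norm z.im := by
  rw [Zsqrtd.norm_def, show z.re * z.re - D * z.im * z.im = z.re ^ 2 + z.im * (-(D * z.im)) by ring]
  exact hz.pow_left.add_mul_left_left _

theorem dvd_im_mul_star_of_dvd_im_mul_star {m : ℤ} (ha : IsCoprime m a.im)
    (hz : m ∣ (z * star a).im) (hw : m ∣ (w * star a).im) : m ∣ (z * star w).im := by
  refine ha.dvd_of_dvd_mul_left ?_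
  convert (hz.mul_right w.im).sub (hw.mul_right z.im) using 1
  simp only [Zsqrtd.im_mul, Zsqrtd.re_star, Zsqrtd.im_star]
  ring

theorem dvd_gcd_mul_im_mul (hz : z.norm = n) (ha : a.norm = n) :
    n ∣ gcd n (z * star a).im * (z * a).im := by
  refine dvd_gcd_mul_of_dvd_mul ⟨z.im ^ 2 - a.im ^ 2, ?_⟩
  simp only [Zsqrtd.norm_def, Zsqrtd.im_mul, Zsqrtd.re_star, Zsqrtd.im_star] at hz ha ⊢
  linear_combination z.im ^ 2 * ha - a.im ^ 2 * hz

theorem dvd_two_of_dvd_im_mul_star {h : ℤ} (hD : Squarefree D) (hz : IsCoprime z.re z.im)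
    (ha : IsCoprime h a.im) (hnorm : h ^ 2 ∣ z.norm) (hza : h ∣ (z * a).im)
    (hza' : h ∣ (z * star a).im) : h ∣ 2 := by
  have dvd_two_re : h ∣ 2 * z.re := by
    refine ha.dvd_of_dvd_mul_left ?_
    convert hza.sub hza' using 1
    simp only [Zsqrtd.im_mul, Zsqrtd.re_star, Zsqrtd.im_star]
    ring
  refine dvd_of_squarefree_of_sq_dvd_sq_mul hD ?_
  have hcop : IsCoprime (h ^ 2) (z.im ^ 2) :=
    ((isCoprime_norm_im hz).of_isCoprime_of_dvd_left hnorm).pow_right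
  refine hcop.dvd_of_dvd_mul_left ?_
  convert (pow_dvd_pow_of_dvd dvd_two_re 2).sub (hnorm.mul_left 4) using 1
  rw [Zsqrtd.norm_def]
  ring

theorem dvd_two_mul_im_mul_star (hD : Squarefree D) (hn : n ≠ 0) (hz : z.norm = n)
    (hz' : IsCoprime z.re z.im) (hw : w.norm = n) (ha : a.norm = n) (ha' : IsCoprime a.re a.im)
    (hgcd : gcd n (z * star a).im = gcd n (w * star a).im) : n ∣ 2 * (z * star w).im := by
  set d := gcd n (z * star a).im
  obtain ⟨e, hde⟩ : d ∣ n := gcd_dvd_left ..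
  have hd0 : d ≠ 0 := left_ne_zero_of_mul (hde ▸ hn)
  have dvd_conj {v : ℤ√D} (hv : v.norm = n) (hvd : d = gcd n (v * star a).im) :
      e ∣ (v * a).im := by
    have := dvd_gcd_mul_im_mul hv ha
    rwa [← hvd, hde, mul_dvd_mul_iff_left hd0] at this
  have hna : IsCoprime n a.im := ha ▸ isCoprime_norm_im ha'
  have hda : IsCoprime d a.im := hna.of_isCoprime_of_dvd_left ⟨e, hde⟩
  have hea : IsCoprime e a.im := hna.of_isCoprime_of_dvd_left ⟨d, hde.trans (mul_comm d e)⟩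
  have hzd : d ∣ (z * star a).im := gcd_dvd_right ..
  have hze : e ∣ (z * a).im := dvd_conj hz rfl
  have gcd_dvd_two : gcd d e ∣ 2 := by
    refine dvd_two_of_dvd_im_mul_star hD hz' (hda.of_isCoprime_of_dvd_left (gcd_dvd_left d e)) ?_
      ((gcd_dvd_right d e).trans hze) ((gcd_dvd_left d e).trans hzd)
    rw [hz, hde, sq]
    exact mul_dvd_mul (gcd_dvd_left d e) (gcd_dvd_right d e)
  have lcm_dvd_im : lcm d e ∣ (z * star w).im := by
    refine lcm_dvd (dvd_im_mul_star_of_dvd_im_mul_star hda hzd (hgcd ▸ gcd_dvd_right ..)) ?_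
    refine dvd_im_mul_star_of_dvd_im_mul_star (a := star a) (by simpa using hea.neg_right) ?_ ?_
    · rwa [star_star]
    · rw [star_star]
      exact dvd_conj hw hgcd
  calc n = d * e := hde
    _ ∣ gcd d e * lcm d e := (gcd_mul_lcm d e).symm.dvd
    _ ∣ 2 * (z * star w).im := mul_dvd_mul gcd_dvd_two lcm_dvd_im

theorem intCast_dvd_of_dvd_im (hz : n ^ 2 ∣ z.norm) (him : n ∣ z.im) : (n : ℤ√D) ∣ z := by
  refine (Zsqrtd.intCast_dvd n z).mpr ⟨(Int.pow_dvd_pow_iff two_ne_zero).mp ?_, him⟩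
  have re_sq : z.re ^ 2 = z.norm + D * z.im ^ 2 := by
    rw [Zsqrtd.norm_def]
    ring
  rw [re_sq]
  exact dvd_add hz ((pow_dvd_pow_of_dvd him 2).mul_left D)

theorem intCast_dvd_two_mul_mul_star (hD : Squarefree D) (hn : n ≠ 0) (hz : z.norm = n)
    (hz' : IsCoprime z.re z.im) (hw : w.norm = n) (ha : a.norm = n) (ha' : IsCoprime a.re a.im)
    (hgcd : gcd n (z * star a).im = gcd n (w * star a).im) :
    (n : ℤ√D) ∣ (2 : ℤ) * (z * star w) := by
  refine intCast_dvd_of_dvd_im ⟨4, ?_⟩ ?_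
  · rw [Zsqrtd.norm_mul, Zsqrtd.norm_mul, Zsqrtd.norm_conj, Zsqrtd.norm_intCast, hz, hw]
    ring
  · rw [Zsqrtd.im_smul]
    exact dvd_two_mul_im_mul_star hD hn hz hz' hw ha ha' hgcd

end Primitive

section Count

variable {D n : ℤ} {R : ℝ} {S : Finset (ℤ√D)}

theorem abs_re_mul_star_le {z w : ℤ√D} (hzre : |(z.re : ℝ)| ≤ R) (hzim : |(z.im : ℝ)| ≤ R)
    (hwre : |(w.re : ℝ)| ≤ R) (hwim : |(w.im : ℝ)| ≤ R) :
    |((z * star w).re : ℝ)| ≤ (1 + |(D : ℝ)|) * R ^ 2 := by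
  have hR : 0 ≤ R := (abs_nonneg _).trans hzre
  calc |((z * star w).re : ℝ)| = |(z.re : ℝ) * w.re - D * z.im * w.im| := by
        simp [sub_eq_add_neg]
    _ ≤ |(z.re : ℝ)| * |(w.re : ℝ)| + |(D : ℝ)| * |(z.im : ℝ)| * |(w.im : ℝ)| := by
        simpa only [abs_mul] using abs_sub (z.re * w.re : ℝ) (D * z.im * w.im)
    _ ≤ R * R + |(D : ℝ)| * R * R := by gcongr
    _ = (1 + |(D : ℝ)|) * R ^ 2 := by ring

theorem card_le_of_intCast_dvd_two_mul_mul_star (hD : D ≠ 0) (hn : n ≠ 0)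
    (hS : ∀ z ∈ S, z.norm = n ∧ |(z.re : ℝ)| ≤ R ∧ |(z.im : ℝ)| ≤ R)
    (hdvd : ∀ z ∈ S, ∀ w ∈ S, (n : ℤ√D) ∣ (2 : ℤ) * (z * star w)) :
    #S ≤ 4 * (⌊logb (5 / 4) (2 * (1 + |(D : ℝ)|) * R ^ 2)⌋₊ + 2) := by
  rcases S.eq_empty_or_nonempty with rfl | ⟨w, hw⟩
  · simp
  obtain ⟨hwn, hwre, hwim⟩ := hS w hw
  choose! t ht using fun z hz ↦ hdvd z hz w hw
  have t_injOn : Set.InjOn t S := fun z hz z' hz' htt' ↦ by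
    have two_mul_eq {z} (hz : z ∈ S) : ((2 * n : ℤ) : ℤ√D) * z = n * (t z * w) := by
      rw [← mul_assoc, ← ht z hz, mul_assoc, mul_assoc, mul_comm (star w),
        ← Zsqrtd.norm_eq_mul_conj, hwn]
      push_cast
      ring
    exact Zsqrtd.eq_of_smul_eq_smul_left (mul_ne_zero two_ne_zero hn)
      (by rw [two_mul_eq hz, two_mul_eq hz', htt'])
  have norm_t {z} (hz : z ∈ S) : (t z).norm = 4 := by
    have := congrArg Zsqrtd.norm (ht z hz)
    simp only [Zsqrtd.norm_mul, Zsqrtd.norm_conj, Zsqrtd.norm_intCast, hwn, (hS z hz).1] at this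
    exact mul_left_cancel₀ (mul_ne_zero hn hn) (by linear_combination -this)
  have abs_re_t_le {z} (hz : z ∈ S) : |((t z).re : ℝ)| ≤ 2 * (1 + |(D : ℝ)|) * R ^ 2 := by
    obtain ⟨-, hzre, hzim⟩ := hS z hz
    have hre : (n : ℝ) * (t z).re = 2 * (z * star w).re := by
      have := congrArg Zsqrtd.re (ht z hz)
      rw [Zsqrtd.re_smul, Zsqrtd.re_smul] at this
      exact_mod_cast this.symm
    calc |((t z).re : ℝ)| ≤ |(n : ℝ)| * |((t z).re : ℝ)| :=
          le_mul_of_one_le_left (abs_nonneg _) (mod_cast Int.one_le_abs hn)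
      _ = 2 * |((z * star w).re : ℝ)| := by rw [← abs_mul, hre, abs_mul, abs_two]
      _ ≤ 2 * ((1 + |(D : ℝ)|) * R ^ 2) := by
          gcongr
          exact abs_re_mul_star_le hzre hzim hwre hwim
      _ = 2 * (1 + |(D : ℝ)|) * R ^ 2 := by ring
  have card_image_le := card_norm_eq_le_of_pos (T := S.image t)
    (K := 2 * (1 + |(D : ℝ)|) * R ^ 2) hD four_pos <| by
      intro u hu
      obtain ⟨z, hz, rfl⟩ := mem_image.mp hu
      exact ⟨norm_t hz, abs_re_t_le hz⟩
  have ratio_eq : (((4 : ℤ) : ℝ) + 1) / (4 : ℤ) = 5 / 4 := by norm_num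
  rwa [card_image_of_injOn t_injOn, ratio_eq] at card_image_le

theorem card_primitive_norm_eq_le (hD : Squarefree D) (hn : n ≠ 0)
    (hS : ∀ z ∈ S, z.norm = n ∧ |(z.re : ℝ)| ≤ R ∧ |(z.im : ℝ)| ≤ R)
    (hprim : ∀ z ∈ S, IsCoprime z.re z.im) :
    #S ≤ 4 * (⌊logb (5 / 4) (2 * (1 + |(D : ℝ)|) * R ^ 2)⌋₊ + 2) * #n.natAbs.divisors := by
  rcases S.eq_empty_or_nonempty with rfl | ⟨a, ha⟩
  · simp
  refine card_le_mul_card_image_of_maps_to (f := fun z ↦ Int.gcd n (z * star a).im) ?_ _ ?_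
  · intro z _
    exact Nat.mem_divisors.mpr ⟨Nat.gcd_dvd_left .., Int.natAbs_ne_zero.mpr hn⟩
  intro d _
  refine card_le_of_intCast_dvd_two_mul_mul_star hD.ne_zero hn
    (fun z hz ↦ hS z (mem_filter.mp hz).1) fun z hz w hw ↦ ?_
  obtain ⟨hzS, hzd⟩ := mem_filter.mp hz
  obtain ⟨hwS, hwd⟩ := mem_filter.mp hw
  refine intCast_dvd_two_mul_mul_star hD hn (hS z hzS).1 (hprim z hzS) (hS w hwS).1 (hS a ha).1
    (hprim a ha) ?_
  rw [← Int.coe_gcd, ← Int.coe_gcd, hzd, hwd]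

theorem card_norm_eq_le_of_gcd_eq (hD : Squarefree D) (hn : n ≠ 0)
    (hS : ∀ z ∈ S, z.norm = n ∧ |(z.re : ℝ)| ≤ R ∧ |(z.im : ℝ)| ≤ R) {g : ℕ}
    (hg : ∀ z ∈ S, Int.gcd z.re z.im = g) :
    #S ≤ 4 * (⌊logb (5 / 4) (2 * (1 + |(D : ℝ)|) * R ^ 2)⌋₊ + 2) * #n.natAbs.divisors := by
  rcases S.eq_empty_or_nonempty with rfl | ⟨w, hw⟩
  · simp
  have exists_primitive (z : ℤ√D) (hz : z ∈ S) :
      ∃ v : ℤ√D, z = (g : ℤ) * v ∧ IsCoprime v.re v.im := by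
    rw [← hg z hz]
    refine Zsqrtd.exists_coprime_of_gcd_pos ((Zsqrtd.gcd_pos_iff z).mpr ?_)
    rintro rfl
    exact hn ((hS 0 hz).1.symm.trans Zsqrtd.norm_zero)
  choose! v hv hprim using exists_primitive
  have norm_eq {z} (hz : z ∈ S) : (g : ℤ) ^ 2 * (v z).norm = n := by
    rw [sq, ← Zsqrtd.norm_intCast (d := D), ← Zsqrtd.norm_mul, ← hv z hz, (hS z hz).1]
  have hg0 : (g : ℤ) ≠ 0 := fun h ↦ hn (by rw [← norm_eq hw, h]; ring)
  have v_injOn : Set.InjOn v S := fun z hz z' hz' h ↦ by rw [hv z hz, hv z' hz', h]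
  have abs_le_of_abs_mul_le {t : ℤ} (ht : |((g * t : ℤ) : ℝ)| ≤ R) : |(t : ℝ)| ≤ R := by
    refine le_trans ?_ ht
    rw [Int.cast_mul, abs_mul]
    exact le_mul_of_one_le_left (abs_nonneg _) (mod_cast Int.one_le_abs hg0)
  have hv_mem : ∀ u ∈ S.image v, u.norm = (v w).norm ∧ |(u.re : ℝ)| ≤ R ∧ |(u.im : ℝ)| ≤ R := by
    intro u hu
    obtain ⟨z, hz, rfl⟩ := mem_image.mp hu
    obtain ⟨-, hre, him⟩ := hS z hz
    rw [hv z hz, Zsqrtd.re_smul] at hre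
    rw [hv z hz, Zsqrtd.im_smul] at him
    exact ⟨mul_left_cancel₀ (pow_ne_zero 2 hg0) ((norm_eq hz).trans (norm_eq hw).symm),
      abs_le_of_abs_mul_le hre, abs_le_of_abs_mul_le him⟩
  have hvn : (v w).norm ≠ 0 := fun h ↦ hn (by rw [← norm_eq hw, h, mul_zero])
  rw [← card_image_of_injOn v_injOn]
  refine (card_primitive_norm_eq_le hD hvn hv_mem (forall_mem_image.mpr hprim)).trans ?_
  gcongr
  exact Int.natAbs_dvd_natAbs.mpr (Dvd.intro_left _ (norm_eq hw))

theorem card_norm_eq_le (hD : Squarefree D) (hn : n ≠ 0)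
    (hS : ∀ z ∈ S, z.norm = n ∧ |(z.re : ℝ)| ≤ R ∧ |(z.im : ℝ)| ≤ R) :
    #S ≤ 4 * (⌊logb (5 / 4) (2 * (1 + |(D : ℝ)|) * R ^ 2)⌋₊ + 2) * #n.natAbs.divisors ^ 2 := by
  rw [sq #_, ← mul_assoc]
  refine card_le_mul_card_image_of_maps_to (f := fun z : ℤ√D ↦ Int.gcd z.re z.im) ?_ _ ?_
  · intro z hz
    refine Nat.mem_divisors.mpr ⟨Int.natCast_dvd.mp ?_, Int.natAbs_ne_zero.mpr hn⟩
    rw [← (hS z hz).1, Zsqrtd.norm_def]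
    exact dvd_sub ((Int.gcd_dvd_left ..).mul_left _) ((Int.gcd_dvd_right ..).mul_left _)
  · exact fun g _ ↦ card_norm_eq_le_of_gcd_eq hD hn (fun z hz ↦ hS z (mem_filter.mp hz).1)
      fun z hz ↦ (mem_filter.mp hz).2

theorem exists_card_norm_eq_le_rpow {ε : ℝ} (hε : 0 < ε) :
    ∃ c : ℝ, 0 < c ∧ ∀ {D n : ℤ} {R P : ℝ} {S : Finset (ℤ√D)}, Squarefree D → n ≠ 0 → 1 ≤ R →
      |(D : ℝ)| * R ≤ P → |(n : ℝ)| ≤ P →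
      (∀ z ∈ S, z.norm = n ∧ |(z.re : ℝ)| ≤ R ∧ |(z.im : ℝ)| ≤ R) → (#S : ℝ) ≤ c * P ^ ε := by
  obtain ⟨δ, hδ, rfl⟩ : ∃ δ, 0 < δ ∧ ε = δ * (4 : ℕ) := ⟨ε / 4, by positivity, by norm_num⟩
  obtain ⟨c₁, hc₁, floor_le⟩ :=
    exists_floor_logb_add_le_rpow (r := 5 / 4) (by norm_num) hδ zero_le_two
  obtain ⟨c₂, hc₂, card_divisors_le⟩ := exists_card_divisors_le_rpow hδ
  refine ⟨4 * (c₁ * 4 ^ δ) * c₂ ^ 2, by positivity, fun {D n R P S} hD hn hR hDR hnP hS ↦ ?_⟩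
  have hD1 : 1 ≤ |(D : ℝ)| := mod_cast Int.one_le_abs hD.ne_zero
  have hP : 0 ≤ P := (abs_nonneg _).trans hnP
  have box_le : 2 * (1 + |(D : ℝ)|) * R ^ 2 ≤ 4 * P ^ 2 :=
    calc 2 * (1 + |(D : ℝ)|) * R ^ 2 ≤ 4 * (|(D : ℝ)| * R) ^ 2 := by
          nlinarith [mul_nonneg (sub_nonneg.mpr hD1) (sq_nonneg R),
            mul_nonneg (mul_nonneg (abs_nonneg (D : ℝ)) (sub_nonneg.mpr hD1)) (sq_nonneg R)]
      _ ≤ 4 * P ^ 2 := by gcongr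
  have one_le_box : 1 ≤ 2 * (1 + |(D : ℝ)|) * R ^ 2 := by nlinarith
  have log_le : (⌊logb (5 / 4) (2 * (1 + |(D : ℝ)|) * R ^ 2)⌋₊ + 2 : ℝ) ≤
      c₁ * 4 ^ δ * (P ^ δ) ^ 2 :=
    calc _ ≤ c₁ * (2 * (1 + |(D : ℝ)|) * R ^ 2) ^ δ := floor_le _ one_le_box
      _ ≤ c₁ * (4 * P ^ 2) ^ δ := by gcongr
      _ = c₁ * 4 ^ δ * (P ^ δ) ^ 2 := by
          rw [mul_rpow zero_le_four (sq_nonneg P), ← rpow_pow_comm hP, mul_assoc]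
  have card_le := card_norm_eq_le hD hn hS
  have divisors_le : (#n.natAbs.divisors : ℝ) ≤ c₂ * P ^ δ := by
    refine (card_divisors_le _ (Int.natAbs_ne_zero.mpr hn)).trans ?_
    rw [Nat.cast_natAbs, Int.cast_abs]
    gcongr
  calc (#S : ℝ) ≤ 4 * (⌊logb (5 / 4) (2 * (1 + |(D : ℝ)|) * R ^ 2)⌋₊ + 2) *
          (#n.natAbs.divisors : ℝ) ^ 2 := mod_cast card_le
    _ ≤ 4 * (c₁ * 4 ^ δ * (P ^ δ) ^ 2) * (c₂ * P ^ δ) ^ 2 := by gcongr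
    _ = 4 * (c₁ * 4 ^ δ) * c₂ ^ 2 * (P ^ δ) ^ 4 := by ring
    _ = 4 * (c₁ * 4 ^ δ) * c₂ ^ 2 * P ^ (δ * (4 : ℕ)) := by rw [rpow_mul_natCast hP]

end Count

section Conic

theorem exists_squarefree_mul_sq {k : ℤ} (hk : k ≠ 0) :
    ∃ D m : ℤ, Squarefree D ∧ m ≠ 0 ∧ k = D * m ^ 2 := by
  obtain ⟨a, b, hab, ha⟩ := Nat.sq_mul_squarefree k.natAbs
  have hb : b ≠ 0 := by
    rintro rfl
    exact hk (by simpa using hab.symm)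
  refine ⟨k.sign * a, b, ?_, mod_cast hb, ?_⟩
  · rw [← Int.squarefree_natAbs, Int.natAbs_mul, Int.natAbs_sign_of_ne_zero hk]
    simpa using ha
  · conv_lhs => rw [← Int.sign_mul_natAbs k, ← hab]
    push_cast
    ring

theorem norm_mk_eq_mul_of_conic {A B C D m X Y : ℤ} (hDm : -(A * B) = D * m ^ 2)
    (h : A * X ^ 2 + B * Y ^ 2 = C) : (⟨A * X, m * Y⟩ : ℤ√D).norm = A * C := by
  rw [Zsqrtd.norm_def]
  linear_combination A * h + Y ^ 2 * hDm

theorem exists_squarefree_card_eq_of_conic {A B C : ℤ} (hA : A ≠ 0) (hB : B ≠ 0) {x : ℝ}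
    {S : Finset (ℤ × ℤ)}
    (hS : ∀ p ∈ S, A * p.1 ^ 2 + B * p.2 ^ 2 = C ∧ |(p.1 : ℝ)| ≤ x ∧ |(p.2 : ℝ)| ≤ x) :
    ∃ (D : ℤ) (T : Finset (ℤ√D)), Squarefree D ∧ |(D : ℝ)| ≤ |(A * B : ℝ)| ∧ #T = #S ∧
      ∀ z ∈ T, z.norm = A * C ∧ |(z.re : ℝ)| ≤ |(A * B : ℝ)| * x ∧
        |(z.im : ℝ)| ≤ |(A * B : ℝ)| * x := by
  have hAB : A * B ≠ 0 := mul_ne_zero hA hB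
  obtain ⟨D, m, hD, hm, hDm⟩ := exists_squarefree_mul_sq (neg_ne_zero.mpr hAB)
  have abs_le_of_dvd {k : ℤ} (hk : k ∣ -(A * B)) : |(k : ℝ)| ≤ |(A * B : ℝ)| := by
    have := Int.natAbs_le_of_dvd_ne_zero (dvd_neg.mp hk) hAB
    rw [← Int.cast_mul, ← Int.cast_abs, ← Int.cast_abs, ← Nat.cast_natAbs, ← Nat.cast_natAbs]
    exact_mod_cast this
  have abs_mul_le {k t : ℤ} (hk : k ∣ -(A * B)) (ht : |(t : ℝ)| ≤ x) :
      |((k * t : ℤ) : ℝ)| ≤ |(A * B : ℝ)| * x := by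
    rw [Int.cast_mul, abs_mul]
    exact mul_le_mul (abs_le_of_dvd hk) ht (abs_nonneg _) (abs_nonneg _)
  let f (p : ℤ × ℤ) : ℤ√D := ⟨A * p.1, m * p.2⟩
  have f_injective : Function.Injective f := fun p q h ↦ by
    obtain ⟨h₁, h₂⟩ := Zsqrtd.ext_iff.mp h
    exact Prod.ext (mul_left_cancel₀ hA h₁) (mul_left_cancel₀ hm h₂)
  refine ⟨D, S.image f, hD, abs_le_of_dvd (hDm ▸ dvd_mul_right D _),
    card_image_of_injective S f_injective, forall_mem_image.mpr fun p hp ↦ ?_⟩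
  obtain ⟨hp, hp₁, hp₂⟩ := hS p hp
  exact ⟨norm_mk_eq_mul_of_conic hDm hp, abs_mul_le (dvd_neg.mpr (dvd_mul_right A B)) hp₁,
    abs_mul_le (hDm ▸ (dvd_pow_self m two_ne_zero).mul_left D) hp₂⟩

theorem exists_card_conic_le_rpow {ε : ℝ} (hε : 0 < ε) :
    ∃ c : ℝ, 0 < c ∧ ∀ {A B C : ℤ} {x : ℝ} {S : Finset (ℤ × ℤ)}, A ≠ 0 → B ≠ 0 → C ≠ 0 → 1 ≤ x →
      (∀ p ∈ S, A * p.1 ^ 2 + B * p.2 ^ 2 = C ∧ |(p.1 : ℝ)| ≤ x ∧ |(p.2 : ℝ)| ≤ x) →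
        (#S : ℝ) ≤ c * (|(A * B * C : ℝ)| * x) ^ ε := by
  obtain ⟨δ, hδ, rfl⟩ : ∃ δ, 0 < δ ∧ ε = (2 : ℕ) * δ := ⟨ε / 2, by positivity, by push_cast; ring⟩
  obtain ⟨c, hc, card_norm_le⟩ := exists_card_norm_eq_le_rpow hδ
  refine ⟨c, hc, fun {A B C x S} hA hB hC hx hS ↦ ?_⟩
  obtain ⟨D, T, hD, hDAB, hTS, hT⟩ := exists_squarefree_card_eq_of_conic hA hB hS
  have hA1 : 1 ≤ |(A : ℝ)| := mod_cast Int.one_le_abs hA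
  have hB1 : 1 ≤ |(B : ℝ)| := mod_cast Int.one_le_abs hB
  have hC1 : 1 ≤ |(C : ℝ)| := mod_cast Int.one_le_abs hC
  have hAB1 : 1 ≤ |(A * B : ℝ)| := abs_mul (A : ℝ) B ▸ one_le_mul_of_one_le_of_one_le hA1 hB1
  set H : ℝ := |(A * B * C : ℝ)| * x with hH
  have hABx : |(A * B : ℝ)| * x ≤ H := by
    rw [hH, abs_mul (A * B : ℝ)]
    gcongr
    exact le_mul_of_one_le_right (abs_nonneg _) hC1
  have one_le_box : 1 ≤ |(A * B : ℝ)| * x := one_le_mul_of_one_le_of_one_le hAB1 hx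
  have hDH : |(D : ℝ)| * (|(A * B : ℝ)| * x) ≤ H ^ 2 := by
    rw [sq]
    gcongr
    exact (hDAB.trans (le_mul_of_one_le_right (abs_nonneg _) hx)).trans hABx
  have hACH : |((A * C : ℤ) : ℝ)| ≤ H ^ 2 :=
    calc |((A * C : ℤ) : ℝ)| ≤ |((A * C : ℤ) : ℝ)| * (|(B : ℝ)| * x) :=
          le_mul_of_one_le_right (abs_nonneg _) (one_le_mul_of_one_le_of_one_le hB1 hx)
      _ = H := by
          rw [hH, Int.cast_mul, mul_right_comm (A : ℝ), abs_mul (A * C : ℝ), mul_assoc]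
      _ ≤ H ^ 2 := le_self_pow₀ (one_le_box.trans hABx) two_ne_zero
  rw [← hTS, rpow_natCast_mul (by positivity)]
  exact card_norm_le hD (mul_ne_zero hA hC) one_le_box hDH hACH hT

theorem finite_setOf_abs_le_prod (x : ℝ) :
    {p : ℤ × ℤ | |(p.1 : ℝ)| ≤ x ∧ |(p.2 : ℝ)| ≤ x}.Finite := by
  have finite_abs_le : {t : ℤ | |(t : ℝ)| ≤ x}.Finite := by
    refine (Set.finite_Icc (-⌊x⌋) ⌊x⌋).subset fun t ht ↦ abs_le.mp (Int.le_floor.mpr ?_)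
    exact_mod_cast ht
  exact finite_abs_le.prod finite_abs_le

end Conic

/-- For every `ε > 0` there is a constant `C(ε) > 0` such that for all
nonzero integers `A, B, C` and all reals `x ≥ 1`, the number of integer points `(X,Y)` with
`max(|X|,|Y|) ≤ x` on the conic `AX² + BY² = C` is at most `C(ε) · (|ABC|·x)^ε`. -/
theorem count_points_on_conic (ε : ℝ) (hε : 0 < ε) :
    ∃ Cε : ℝ, 0 < Cε ∧ ∀ A B C : ℤ, A ≠ 0 → B ≠ 0 → C ≠ 0 → ∀ x : ℝ, 1 ≤ x →
      (Nat.card {XY : ℤ × ℤ | ((max |XY.1| |XY.2| : ℤ) : ℝ) ≤ x ∧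
          A * XY.1 ^ 2 + B * XY.2 ^ 2 = C} : ℝ) ≤
        Cε * ((|A * B * C| : ℝ) * x) ^ ε := by
  obtain ⟨c, hc, card_le⟩ := exists_card_conic_le_rpow hε
  refine ⟨c, hc, fun A B C hA hB hC x hx ↦ ?_⟩
  simp only [Int.cast_max, Int.cast_abs, max_le_iff]
  set S : Set (ℤ × ℤ) := {p | (|(p.1 : ℝ)| ≤ x ∧ |(p.2 : ℝ)| ≤ x) ∧ A * p.1 ^ 2 + B * p.2 ^ 2 = C}
  have hS : S.Finite := (finite_setOf_abs_le_prod x).subset fun p hp ↦ hp.1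
  rw [Nat.card_coe_set_eq, Set.ncard_eq_toFinset_card S hS]
  exact card_le hA hB hC hx fun p hp ↦ (hS.mem_toFinset.mp hp).symm
end

section
/- Let p be an odd prime and let α₁, α₂, α₃ be integers coprime to p. Then the number of triples (x₁,x₂,x₃) ∈ (ℤ/pℤ)³ with x₁x₂x₃ ≠ 0 and α₁x₁² + α₂x₂² + α₃x₃² = 0 in ℤ/pℤ equals (p−1)(p − s_p(α₁,α₂,α₃)). -/
/-!
Scaling by the last coordinate identifies the solutions with pairs of a unit and a point
`(u, v) ∈ Fˣ × Fˣ` of the conic `a * u ^ 2 + b * v ^ 2 = -c`. With `χ` the quadratic character and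
`ε` the trivial one, `a * u ^ 2 = s` has `ε s + χ a * χ s` solutions `u ∈ Fˣ`. Hence the number of
points on the conic `a * u ^ 2 + b * v ^ 2 = 1` is the sum of
`(ε s + χ a * χ s) * (ε (1 - s) + χ b * χ (1 - s))` over `s`, which is a combination of the Jacobi
sums `J(ε, ε) = q - 2`, `J(ε, χ) = J(χ, ε) = -1` and `J(χ, χ) = -χ (-1)`.
-/

open Finset

lemma card_filter_add_eq_sum {ι κ G : Type*} [Fintype ι] [Fintype κ] [AddCommGroup G] [Fintype G]
    [DecidableEq G] (f : ι → G) (g : κ → G) (d : G) :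
    #{x : ι × κ | f x.1 + g x.2 = d} = ∑ s, #{i | f i = s} * #{k | g k = d - s} := by
  rw [card_eq_sum_card_fiberwise (t := univ) (f := fun x ↦ f x.1) fun _ _ ↦ mem_coe.2 (mem_univ _)]
  refine sum_congr rfl fun s _ ↦ ?_
  rw [← card_product]
  congr 1
  ext x
  simp only [mem_filter, mem_univ, true_and, mem_product, eq_sub_iff_add_eq']
  constructor
  · rintro ⟨h, rfl⟩
    exact ⟨rfl, h⟩
  · rintro ⟨rfl, h⟩
    exact ⟨h, rfl⟩

lemma card_ternary_zeros_eq_card_units_mul_card_conic {F : Type*} [Field F] (a b c : F) :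
    Nat.card {x : F × F × F | x.1 * x.2.1 * x.2.2 ≠ 0 ∧
        a * x.1 ^ 2 + b * x.2.1 ^ 2 + c * x.2.2 ^ 2 = 0} =
      Nat.card Fˣ * Nat.card {u : Fˣ × Fˣ | a * (u.1 : F) ^ 2 + b * (u.2 : F) ^ 2 = -c} := by
  rw [← Nat.card_prod]
  symm
  refine Nat.card_eq_of_bijective
    (fun w ↦ ⟨(w.2.1.1 * w.1, w.2.1.2 * w.1, w.1), by simp, ?_⟩) ⟨?_, ?_⟩
  · have hw : a * (w.2.1.1 : F) ^ 2 + b * (w.2.1.2 : F) ^ 2 = -c := w.2.2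
    linear_combination (w.1 : F) ^ 2 * hw
  · rintro ⟨z, ⟨u, v⟩, _⟩ ⟨z', ⟨u', v'⟩, _⟩ h
    simp only [Subtype.mk.injEq, Prod.mk.injEq, Units.val_inj] at h
    obtain ⟨hu, hv, rfl⟩ := h
    obtain rfl := Units.ext (mul_right_cancel₀ z.ne_zero hu)
    obtain rfl := Units.ext (mul_right_cancel₀ z.ne_zero hv)
    rfl
  · rintro ⟨⟨x, y, z⟩, hxyz, h⟩
    obtain ⟨⟨hx, hy⟩, hz⟩ : (x ≠ 0 ∧ y ≠ 0) ∧ z ≠ 0 := by simpa using hxyz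
    refine ⟨⟨.mk0 z hz, (.mk0 x hx / .mk0 z hz, .mk0 y hy / .mk0 z hz), ?_⟩, by simp [hz]⟩
    simp only [Set.mem_ofPred_eq, Units.val_div_eq_div_val, Units.val_mk0] at h ⊢
    field_simp
    linear_combination h

section Characters

variable {F R : Type*} [Field F] [CommRing R] {χ : MulChar F R}

lemma map_div_of_isQuadratic (hχ : χ.IsQuadratic) (a b : F) : χ (a / b) = χ a * χ b := by
  rw [div_eq_mul_inv, map_mul, ← χ.inv_apply', hχ.inv]

lemma sum_one_add_mul_mul_one_add_mul_of_isQuadratic [Fintype F] [IsDomain R]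
    (hχ : χ.IsQuadratic) (hχ₁ : χ ≠ 1) (α β : R) :
    ∑ s, ((1 : MulChar F R) s + α * χ s) * ((1 : MulChar F R) (1 - s) + β * χ (1 - s)) =
      Fintype.card F - 2 - α - β - α * β * χ (-1) := by
  have hJ : jacobiSum χ χ = -χ (-1) := by
    simpa only [hχ.inv] using jacobiSum_nontrivial_inv hχ₁
  calc
    _ = jacobiSum (1 : MulChar F R) 1 + β * jacobiSum 1 χ + α * jacobiSum χ 1 +
        α * β * jacobiSum χ χ := by
      simp only [jacobiSum, mul_sum, ← sum_add_distrib]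
      exact sum_congr rfl fun s _ ↦ by ring
    _ = _ := by
      rw [jacobiSum_comm χ 1, jacobiSum_one_one, jacobiSum_one_nontrivial hχ₁, hJ]
      ring

end Characters

section FiniteField

variable {F : Type*} [Field F] [Fintype F] [DecidableEq F] {a b c d : F}

lemma card_units_mul_sq_eq (hF : ringChar F ≠ 2) (ha : a ≠ 0) (s : F) :
    (#{u : Fˣ | a * (u : F) ^ 2 = s} : ℤ) =
      (1 : MulChar F ℤ) s + quadraticChar F a * quadraticChar F s := by
  rcases eq_or_ne s 0 with rfl | hs
  · simp [ha, MulChar.map_zero]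
  have hcard : #{u : Fˣ | a * (u : F) ^ 2 = s} = #{x : F | x ^ 2 = s / a}.toFinset := by
    rw [← card_map ⟨Units.val, Units.val_injective⟩]
    congr 1
    ext x
    simp only [mem_map, mem_filter, mem_univ, true_and, Function.Embedding.coeFn_mk,
      Set.mem_toFinset, Set.mem_ofPred_eq, eq_div_iff ha, mul_comm _ a]
    constructor
    · rintro ⟨u, hu, rfl⟩
      exact hu
    · intro hx
      have hx₀ : x ≠ 0 := by
        rintro rfl
        exact hs (by simpa using hx.symm)
      exact ⟨.mk0 x hx₀, hx, rfl⟩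
  rw [hcard, quadraticChar_card_sqrts hF, map_div_of_isQuadratic (quadraticChar_isQuadratic F),
    MulChar.one_apply hs.isUnit]
  ring

lemma card_units_conic_eq_one (hF : ringChar F ≠ 2) (ha : a ≠ 0) (hb : b ≠ 0) :
    (#{u : Fˣ × Fˣ | a * (u.1 : F) ^ 2 + b * (u.2 : F) ^ 2 = 1} : ℤ) =
      Fintype.card F - 2 - quadraticChar F a - quadraticChar F b - quadraticChar F (-(a * b)) := by
  rw [card_filter_add_eq_sum (fun u : Fˣ ↦ a * (u : F) ^ 2) fun v : Fˣ ↦ b * (v : F) ^ 2]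
  push_cast
  simp only [card_units_mul_sq_eq hF ha, card_units_mul_sq_eq hF hb]
  rw [sum_one_add_mul_mul_one_add_mul_of_isQuadratic (quadraticChar_isQuadratic F)
      (quadraticChar_ne_one hF), ← map_mul, ← map_mul, mul_neg_one]

lemma card_units_conic (hF : ringChar F ≠ 2) (ha : a ≠ 0) (hb : b ≠ 0) (hd : d ≠ 0) :
    (#{u : Fˣ × Fˣ | a * (u.1 : F) ^ 2 + b * (u.2 : F) ^ 2 = d} : ℤ) =
      Fintype.card F - 2 - quadraticChar F (a * d) - quadraticChar F (b * d) -
        quadraticChar F (-(a * b)) := by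
  have hiff (u : Fˣ × Fˣ) : a * (u.1 : F) ^ 2 + b * (u.2 : F) ^ 2 = d ↔
      a / d * (u.1 : F) ^ 2 + b / d * (u.2 : F) ^ 2 = 1 := by
    field_simp
  have hab : -(a / d * (b / d)) = -(a * b) / d ^ 2 := by ring
  simp only [hiff]
  rw [card_units_conic_eq_one hF (div_ne_zero ha hd) (div_ne_zero hb hd), hab]
  simp only [map_div_of_isQuadratic (quadraticChar_isQuadratic F), quadraticChar_sq_one' hd,
    mul_one, map_mul]

theorem count_unit_solutions_mod_p_general (hF : ringChar F ≠ 2) (ha : a ≠ 0) (hb : b ≠ 0)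
    (hc : c ≠ 0) :
    (Nat.card {x : F × F × F | x.1 * x.2.1 * x.2.2 ≠ 0 ∧
        a * x.1 ^ 2 + b * x.2.1 ^ 2 + c * x.2.2 ^ 2 = 0} : ℤ) =
      ((Fintype.card F : ℤ) - 1) * (Fintype.card F - (2 + quadraticChar F (-(a * b)) +
        quadraticChar F (-(a * c)) + quadraticChar F (-(b * c)))) := by
  have hunits : (Nat.card Fˣ : ℤ) = Fintype.card F - 1 := by
    rw [Nat.card_units, Nat.card_eq_fintype_card, Nat.cast_pred Fintype.card_pos]
  have hconic : Nat.card {u : Fˣ × Fˣ | a * (u.1 : F) ^ 2 + b * (u.2 : F) ^ 2 = -c} =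
      #{u : Fˣ × Fˣ | a * (u.1 : F) ^ 2 + b * (u.2 : F) ^ 2 = -c} :=
    Nat.subtype_card _ (by simp)
  rw [card_ternary_zeros_eq_card_units_mul_card_conic, Nat.cast_mul, hunits, hconic,
    card_units_conic hF ha hb (neg_ne_zero.2 hc), mul_neg, mul_neg]
  ring

end FiniteField

/-- For an odd prime `p` and `α₁, α₂, α₃` coprime to `p`, the number of
triples `(x₁,x₂,x₃) ∈ (ℤ/pℤ)³` with `x₁x₂x₃ ≠ 0` and `α₁x₁² + α₂x₂² + α₃x₃² = 0` equals
`(p-1)(p - s_p(α₁,α₂,α₃))`. -/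
theorem count_unit_solutions_mod_p (p : ℕ) [hp : Fact p.Prime] (hodd : Odd p)
    (α₁ α₂ α₃ : ℤ)
    (h1 : ¬ (p : ℤ) ∣ α₁) (h2 : ¬ (p : ℤ) ∣ α₂) (h3 : ¬ (p : ℤ) ∣ α₃) :
    (Nat.card {x : ZMod p × ZMod p × ZMod p |
        x.1 * x.2.1 * x.2.2 ≠ 0 ∧
        (α₁ : ZMod p) * x.1 ^ 2 + (α₂ : ZMod p) * x.2.1 ^ 2 +
          (α₃ : ZMod p) * x.2.2 ^ 2 = 0} : ℤ) =
      ((p : ℤ) - 1) * ((p : ℤ) - (2 + legendreSym p (-(α₁ * α₂))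
        + legendreSym p (-(α₁ * α₃)) + legendreSym p (-(α₂ * α₃)))) := by
  have hF : ringChar (ZMod p) ≠ 2 :=
    (ZMod.ringChar_zmod_n p).trans_ne (by rintro rfl; contradiction)
  simp only [← ZMod.intCast_zmod_eq_zero_iff_dvd] at h1 h2 h3
  simpa [legendreSym] using count_unit_solutions_mod_p_general hF h1 h2 h3
end

section
/- Let p be an odd prime, n ≥ 1 an integer, and α₁, α₂, α₃ integers coprime to p such that −α₂α₃ is a quadratic residue modulo p. Then the number of pairs (y₁,y₂) ∈ (ℤ/pⁿℤ)² with y₁ and y₂ units and α₁y₁² + α₂y₂² + α₃ = 0 in ℤ/pⁿℤ equals p^{n−1}(p − s_p(α₁,α₂,α₃)). -/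
/-!
A solution modulo `p` with unit coordinates lifts, once its first coordinate has been lifted
arbitrarily, in exactly one way: on a finite ring the uniqueness half of Hensel's lemma implies the
existence half, because two fibres of a surjective homomorphism have the same size.

Over a finite field `F` with quadratic character `χ` and trivial character `1`, each `d` is of the
form `-ax²` with `x ≠ 0` in exactly `1(d) + χ(-ad)` ways. Splitting `c = cs + c(1 - s)`, the number
of solutions of `ax² + by² + c = 0` with `xy ≠ 0` is therefore
`∑ₛ (1(s) + χ(-ac)χ(s)) (1(1-s) + χ(-bc)χ(1-s))`, a combination of the Jacobi sums
`J(1,1) = #F - 2`, `J(1,χ) = J(χ,1) = -1` and `J(χ,χ) = -χ(-1)`.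
-/

open Polynomial

/-- The points of the affine conic `ax² + by² + c = 0` over `R` both of whose coordinates are
units. -/
def conicUnitPoints {R : Type*} [CommRing R] (a b c : R) : Set (R × R) :=
  {y | IsUnit y.1 ∧ IsUnit y.2 ∧ a * y.1 ^ 2 + b * y.2 ^ 2 + c = 0}

section Lifting

variable {R S : Type*} [CommRing R] [CommRing S] {f : R →+* S}

lemma card_preimage_singleton_eq_card_ker (hf : Function.Surjective f) (s : S) :
    Nat.card (f ⁻¹' {s}) = Nat.card (RingHom.ker f) :=
  Nat.card_congr (AddMonoidHom.fiberEquivKerOfSurjective (f := f.toAddMonoidHom) hf s)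

lemma eval_injOn_preimage_singleton [IsLocalHom f] {P : R[X]} {t : S}
    (hP : IsUnit (P.derivative.eval₂ f t)) : Set.InjOn (P.eval ·) (f ⁻¹' {t}) := by
  intro x hx y hy hxy
  simp only [Set.mem_preimage, Set.mem_singleton_iff] at hx hy
  obtain ⟨k, hk⟩ := P.binomExpansion x (y - x)
  have hprod : (P.derivative.eval x + k * (y - x)) * (y - x) = 0 := by
    rw [add_sub_cancel] at hk
    linear_combination -hk - hxy
  have hunit : IsUnit (P.derivative.eval x + k * (y - x)) := by
    refine isUnit_of_map_unit f _ ?_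
    rwa [map_add, map_mul, map_sub, hx, hy, sub_self, mul_zero, add_zero, ← eval₂_at_apply, hx]
  exact (sub_eq_zero.1 (hunit.mul_right_eq_zero.1 hprod)).symm

lemma existsUnique_root_lift [Finite R] [IsLocalHom f] (hf : Function.Surjective f) {P : R[X]}
    {t : S} (hroot : P.eval₂ f t = 0) (hderiv : IsUnit (P.derivative.eval₂ f t)) :
    ∃! y, f y = t ∧ P.eval y = 0 := by
  have hmaps : Set.MapsTo (P.eval ·) (f ⁻¹' {t}) (f ⁻¹' {0}) := by
    rintro y rfl
    rwa [Set.mem_preimage, Set.mem_singleton_iff, ← eval₂_at_apply]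
  have hinj : Set.InjOn (P.eval ·) (f ⁻¹' {t}) := eval_injOn_preimage_singleton hderiv
  have hcard : (f ⁻¹' {0}).ncard ≤ (f ⁻¹' {t}).ncard := by
    simp only [← Nat.card_coe_set_eq, card_preimage_singleton_eq_card_ker hf, le_refl]
  obtain ⟨y, hyt, hy⟩ : (0 : R) ∈ (P.eval ·) '' (f ⁻¹' {t}) := by
    rw [Set.eq_of_subset_of_ncard_le hmaps.image_subset (hinj.ncard_image ▸ hcard)]
    exact map_zero f
  exact ⟨y, ⟨hyt, hy⟩, fun z hz ↦ hinj hz.1 hyt (hz.2.trans hy.symm)⟩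

lemma existsUnique_conic_snd_lift [Finite R] [IsLocalHom f] (hf : Function.Surjective f)
    (h2 : IsUnit (2 : S)) {a b c : R} (hb : IsUnit b) {x : R} {t : S} (ht : IsUnit t)
    (hxt : f a * f x ^ 2 + f b * t ^ 2 + f c = 0) :
    ∃! y, f y = t ∧ a * x ^ 2 + b * y ^ 2 + c = 0 := by
  have hroot : (C (a * x ^ 2 + c) + C b * X ^ 2).eval₂ f t = 0 := by
    rw [eval₂_add, eval₂_mul, eval₂_C, eval₂_C, eval₂_X_pow, map_add, map_mul, map_pow]
    linear_combination hxt
  have hderiv : IsUnit ((C (a * x ^ 2 + c) + C b * X ^ 2).derivative.eval₂ f t) := by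
    have hderiv_eq : (C (a * x ^ 2 + c) + C b * X ^ 2).derivative = C b * (C 2 * X) := by
      rw [derivative_add, derivative_C, derivative_C_mul, derivative_X_sq, zero_add]
    rw [hderiv_eq, eval₂_mul, eval₂_mul, eval₂_C, eval₂_C, eval₂_X, map_ofNat]
    exact (hb.map f).mul (h2.mul ht)
  simpa [add_right_comm] using existsUnique_root_lift hf hroot hderiv

lemma map_mem_conicUnitPoints (f : R →+* S) {a b c : R} {z : R × R}
    (hz : z ∈ conicUnitPoints a b c) :
    (f z.1, f z.2) ∈ conicUnitPoints (f a) (f b) (f c) := by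
  refine ⟨hz.1.map f, hz.2.1.map f, ?_⟩
  simpa only [map_add, map_mul, map_pow, map_zero] using congrArg f hz.2.2

theorem card_conicUnitPoints_eq_card_ker_mul [Finite R] [IsLocalHom f]
    (hf : Function.Surjective f) (h2 : IsUnit (2 : S)) {a b c : R} (hb : IsUnit b) :
    Nat.card (conicUnitPoints a b c) =
      Nat.card (RingHom.ker f) * Nat.card (conicUnitPoints (f a) (f b) (f c)) := by
  let reduce (z : conicUnitPoints a b c) :
      Σ w : conicUnitPoints (f a) (f b) (f c), f ⁻¹' {w.1.1} :=
    ⟨⟨(f z.1.1, f z.1.2), map_mem_conicUnitPoints f z.2⟩, z.1.1, rfl⟩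
  have hreduce : Function.Bijective reduce := by
    constructor
    · rintro ⟨⟨x, y⟩, hz⟩ ⟨⟨x', y'⟩, hz'⟩ h
      obtain rfl : x = x' := congrArg (fun w ↦ (w.2 : R)) h
      have hyy' : f y' = f y := (congrArg (fun w ↦ w.1.1.2) h).symm
      obtain ⟨-, hy, hxy⟩ := map_mem_conicUnitPoints f hz
      obtain rfl : y = y' := (existsUnique_conic_snd_lift hf h2 hb hy hxy).unique
        ⟨rfl, hz.2.2⟩ ⟨hyy', hz'.2.2⟩
      rfl
    · rintro ⟨⟨⟨s, t⟩, hs, ht, hst⟩, ⟨x, hx⟩⟩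
      obtain rfl : f x = s := hx
      obtain ⟨y, ⟨rfl, hxy⟩, -⟩ := existsUnique_conic_snd_lift hf h2 hb ht hst
      exact ⟨⟨(x, y), isUnit_of_map_unit f x hs, isUnit_of_map_unit f y ht, hxy⟩, rfl⟩
  rw [Nat.card_congr ((Equiv.ofBijective reduce hreduce).trans (Equiv.sigmaEquivProdOfEquiv
      fun w ↦ AddMonoidHom.fiberEquivKerOfSurjective (f := f.toAddMonoidHom) hf w.1.1)),
    Nat.card_prod, mul_comm]
  rfl

end Lifting

section FiniteField

lemma card_conicUnitPoints_eq_sum {R : Type*} [CommRing R] [Fintype R] {a b c : R}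
    (hc : IsUnit c) :
    Nat.card (conicUnitPoints a b c) =
      ∑ s, Nat.card {x : R | IsUnit x ∧ a * x ^ 2 + c * s = 0} *
        Nat.card {y : R | IsUnit y ∧ b * y ^ 2 + c * (1 - s) = 0} := by
  let pair (z : Σ s, {x : R | IsUnit x ∧ a * x ^ 2 + c * s = 0} ×
      {y : R | IsUnit y ∧ b * y ^ 2 + c * (1 - s) = 0}) : conicUnitPoints a b c :=
    ⟨(z.2.1, z.2.2), z.2.1.2.1, z.2.2.2.1, by linear_combination z.2.1.2.2 + z.2.2.2.2⟩
  have hpair : Function.Bijective pair := by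
    constructor
    · rintro ⟨s, ⟨x, _, hxs⟩, ⟨y, _⟩⟩ ⟨s', ⟨x', _, hxs'⟩, ⟨y', _⟩⟩ h
      obtain ⟨rfl, rfl⟩ : x = x' ∧ y = y' := Prod.mk.inj (congrArg Subtype.val h)
      obtain rfl : s = s' := hc.mul_left_cancel (by linear_combination hxs - hxs')
      rfl
    · rintro ⟨⟨x, y⟩, hx, hy, hxy⟩
      obtain ⟨s, hs⟩ := hc.dvd (a := -(a * x ^ 2))
      have hxs : a * x ^ 2 + c * s = 0 := by linear_combination -hs
      have hys : b * y ^ 2 + c * (1 - s) = 0 := by linear_combination hxy + hs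
      exact ⟨⟨s, ⟨x, hx, hxs⟩, ⟨y, hy, hys⟩⟩, rfl⟩
  simp only [← Nat.card_congr (Equiv.ofBijective pair hpair), Nat.card_sigma, Nat.card_prod]

variable {F : Type*} [Field F] [Fintype F] [DecidableEq F]

lemma card_isUnit_mul_sq_add_eq_zero (hF : ringChar F ≠ 2) {a : F} (ha : a ≠ 0) (d : F) :
    (Nat.card {x : F | IsUnit x ∧ a * x ^ 2 + d = 0} : ℤ) =
      (1 : MulChar F ℤ) d + quadraticChar F (-(a * d)) := by
  rcases eq_or_ne d 0 with rfl | hd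
  · have hempty : {x : F | IsUnit x ∧ a * x ^ 2 + 0 = 0} = ∅ := by
      ext x
      simp +contextual [ha]
    rw [hempty, MulChar.map_nonunit 1 not_isUnit_zero, mul_zero, neg_zero, MulChar.map_zero]
    simp
  · have hroot (x : F) : a * x ^ 2 + d = 0 ↔ x ^ 2 = -(d / a) := by
      rw [eq_neg_iff_add_eq_zero, ← mul_eq_zero_iff_left (b := x ^ 2 + d / a) ha, mul_add,
        mul_div_cancel₀ d ha]
    have hset : {x : F | IsUnit x ∧ a * x ^ 2 + d = 0} = {x | x ^ 2 = -(d / a)} := by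
      ext x
      simp only [Set.mem_ofPred_eq, ← hroot, isUnit_iff_ne_zero, and_iff_right_iff_imp]
      rintro h rfl
      exact hd (by simpa using h)
    have hχ : quadraticChar F (-(d / a)) = quadraticChar F (-(a * d)) := by
      rw [← mul_one (quadraticChar F (-(d / a))), ← quadraticChar_sq_one' ha, ← map_mul]
      congr 1
      field_simp
    rw [hset, ← hχ, MulChar.one_apply hd.isUnit, add_comm, ← quadraticChar_card_sqrts hF,
      Nat.card_eq_card_toFinset]

lemma jacobiSum_quadraticChar_self (hF : ringChar F ≠ 2) :
    jacobiSum (quadraticChar F) (quadraticChar F) = -quadraticChar F (-1) := by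
  simpa only [(quadraticChar_isQuadratic F).inv] using
    jacobiSum_nontrivial_inv (quadraticChar_ne_one hF)

lemma sum_one_add_mul_quadraticChar_mul_one_sub (hF : ringChar F ≠ 2) (A B : ℤ) :
    ∑ s : F, ((1 : MulChar F ℤ) s + A * quadraticChar F s) *
        ((1 : MulChar F ℤ) (1 - s) + B * quadraticChar F (1 - s)) =
      Fintype.card F - 2 - A - B - A * B * quadraticChar F (-1) := by
  have hχ := quadraticChar_ne_one hF
  calc _ = jacobiSum 1 1 + A * jacobiSum (quadraticChar F) 1 + B * jacobiSum 1 (quadraticChar F) +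
        A * B * jacobiSum (quadraticChar F) (quadraticChar F) := by
        simp only [jacobiSum, Finset.mul_sum]
        rw [← Finset.sum_add_distrib, ← Finset.sum_add_distrib, ← Finset.sum_add_distrib]
        exact Finset.sum_congr rfl fun s _ ↦ by ring
    _ = _ := by
        rw [jacobiSum_comm (quadraticChar F) 1, jacobiSum_one_one, jacobiSum_one_nontrivial hχ,
          jacobiSum_quadraticChar_self hF]
        ring

theorem card_conicUnitPoints_of_field (hF : ringChar F ≠ 2) {a b c : F} (ha : a ≠ 0)
    (hb : b ≠ 0) (hc : c ≠ 0) :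
    (Nat.card (conicUnitPoints a b c) : ℤ) =
      Fintype.card F - (2 + quadraticChar F (-(a * b)) + quadraticChar F (-(a * c)) +
        quadraticChar F (-(b * c))) := by
  have hroots {a : F} (ha : a ≠ 0) (s : F) :
      (Nat.card {x : F | IsUnit x ∧ a * x ^ 2 + c * s = 0} : ℤ) =
        (1 : MulChar F ℤ) s + quadraticChar F (-(a * c)) * quadraticChar F s := by
    rw [card_isUnit_mul_sq_add_eq_zero hF ha, map_mul, MulChar.one_apply hc.isUnit, one_mul,
      ← map_mul, neg_mul, mul_assoc]
  have hχ : quadraticChar F (-(a * c)) * quadraticChar F (-(b * c)) * quadraticChar F (-1) =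
      quadraticChar F (-(a * b)) := by
    rw [← map_mul, ← map_mul, show -(a * c) * -(b * c) * -1 = -(a * b) * c ^ 2 by ring, map_mul,
      quadraticChar_sq_one' hc, mul_one]
  rw [card_conicUnitPoints_eq_sum hc.isUnit]
  push_cast
  simp only [hroots ha, hroots hb, sum_one_add_mul_quadraticChar_mul_one_sub hF, hχ]
  ring

theorem card_conicUnitPoints {R : Type*} [CommRing R] [Finite R] {f : R →+* F} [IsLocalHom f]
    (hf : Function.Surjective f) (hF : ringChar F ≠ 2) {a b c : R} (ha : IsUnit a)
    (hb : IsUnit b) (hc : IsUnit c) :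
    (Nat.card (conicUnitPoints a b c) : ℤ) =
      Nat.card (RingHom.ker f) * (Fintype.card F - (2 + quadraticChar F (f (-(a * b))) +
        quadraticChar F (f (-(a * c))) + quadraticChar F (f (-(b * c))))) := by
  rw [card_conicUnitPoints_eq_card_ker_mul hf (Ring.two_ne_zero hF).isUnit hb, Nat.cast_mul,
    card_conicUnitPoints_of_field hF (ha.map f).ne_zero (hb.map f).ne_zero (hc.map f).ne_zero]
  simp only [map_neg, map_mul]

end FiniteField

section ZModPow

variable {m n : ℕ}

lemma isLocalHom_castHom_zmod_pow (hn : n ≠ 0) :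
    IsLocalHom (ZMod.castHom (dvd_pow_self m hn) (ZMod m)) where
  map_nonunit x hx := by
    obtain ⟨k, rfl⟩ := ZMod.intCast_surjective x
    rw [map_intCast, ZMod.coe_int_isUnit_iff_isCoprime] at hx
    rw [ZMod.coe_int_isUnit_iff_isCoprime, Nat.cast_pow]
    exact hx.pow_left

lemma card_ker_castHom_zmod_pow (hm : m ≠ 0) (hn : n ≠ 0) :
    Nat.card (RingHom.ker (ZMod.castHom (dvd_pow_self m hn) (ZMod m))) = m ^ (n - 1) := by
  set f := ZMod.castHom (dvd_pow_self m hn) (ZMod m)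
  have hsurj : Function.Surjective f.toAddMonoidHom :=
    ZMod.castHom_surjective (dvd_pow_self m hn)
  have hcard := f.toAddMonoidHom.ker.card_mul_index
  rw [AddSubgroup.index_ker, AddMonoidHom.range_eq_top.2 hsurj,
    AddSubgroup.card_top, Nat.card_zmod, Nat.card_zmod] at hcard
  exact Nat.eq_of_mul_eq_mul_right (Nat.pos_of_ne_zero hm)
    (hcard.trans (pow_sub_one_mul hn m).symm)

end ZModPow

theorem count_unit_solutions_mod_p_pow_general (p : ℕ) [Fact p.Prime] (hodd : Odd p)
    (n : ℕ) (hn : 1 ≤ n) (α₁ α₂ α₃ : ℤ)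
    (h1 : ¬ (p : ℤ) ∣ α₁) (h2 : ¬ (p : ℤ) ∣ α₂) (h3 : ¬ (p : ℤ) ∣ α₃) :
    (Nat.card {y : ZMod (p ^ n) × ZMod (p ^ n) |
        IsUnit y.1 ∧ IsUnit y.2 ∧
        (α₁ : ZMod (p ^ n)) * y.1 ^ 2 + (α₂ : ZMod (p ^ n)) * y.2 ^ 2 +
          (α₃ : ZMod (p ^ n)) = 0} : ℤ) =
      (p : ℤ) ^ (n - 1) * ((p : ℤ) - (2 + legendreSym p (-(α₁ * α₂))
        + legendreSym p (-(α₁ * α₃)) + legendreSym p (-(α₂ * α₃)))) := by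
  have hn0 : n ≠ 0 := Nat.one_le_iff_ne_zero.1 hn
  have hF : ringChar (ZMod p) ≠ 2 := by
    rw [ZMod.ringChar_zmod_n]
    exact hodd.ne_two_of_dvd_nat dvd_rfl
  let f := ZMod.castHom (dvd_pow_self p hn0) (ZMod p)
  have : IsLocalHom f := isLocalHom_castHom_zmod_pow hn0
  have hunit {k : ℤ} (hk : ¬ (p : ℤ) ∣ k) : IsUnit (k : ZMod (p ^ n)) := by
    refine isUnit_of_map_unit f _ ?_
    rwa [map_intCast, isUnit_iff_ne_zero, Ne, ZMod.intCast_zmod_eq_zero_iff_dvd]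
  have hcount := card_conicUnitPoints (f := f) (ZMod.castHom_surjective _) hF (hunit h1) (hunit h2)
    (hunit h3)
  simpa only [f, conicUnitPoints, card_ker_castHom_zmod_pow (NeZero.ne p) hn0, ZMod.card,
    legendreSym, map_neg, map_mul, map_intCast, Int.cast_neg, Int.cast_mul, Nat.cast_pow]
    using hcount

/-- If `-α₂α₃` is a quadratic residue mod `p`, then the number of pairs
`(y₁,y₂)` of units of `ℤ/pⁿℤ` with `α₁y₁² + α₂y₂² + α₃ = 0` equals
`p^{n-1}(p - s_p(α₁,α₂,α₃))`. -/
theorem count_unit_solutions_mod_p_pow (p : ℕ) [hp : Fact p.Prime] (hodd : Odd p)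
    (n : ℕ) (hn : 1 ≤ n) (α₁ α₂ α₃ : ℤ)
    (h1 : ¬ (p : ℤ) ∣ α₁) (h2 : ¬ (p : ℤ) ∣ α₂) (h3 : ¬ (p : ℤ) ∣ α₃)
    (hQR : legendreSym p (-(α₂ * α₃)) = 1) :
    (Nat.card {y : ZMod (p ^ n) × ZMod (p ^ n) |
        IsUnit y.1 ∧ IsUnit y.2 ∧
        (α₁ : ZMod (p ^ n)) * y.1 ^ 2 + (α₂ : ZMod (p ^ n)) * y.2 ^ 2 +
          (α₃ : ZMod (p ^ n)) = 0} : ℤ) =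
      (p : ℤ) ^ (n - 1) * ((p : ℤ) - (2 + legendreSym p (-(α₁ * α₂))
        + legendreSym p (-(α₁ * α₃)) + legendreSym p (-(α₂ * α₃)))) :=
  count_unit_solutions_mod_p_pow_general p hodd n hn α₁ α₂ α₃ h1 h2 h3
end
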